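/- arXiv:1810.12334 — 12 statements merged into one kernel-verified Lean document; each statement's English description precedes it below -/
import Mathlib

section
/- Let N ≥ 3 be an integer and f : ℝ × ℝ^N → ℝ. Assume: (existence of local solutions with arbitrary initial data) for every x₀ ∈ ℝ and every (u₀,…,u_{N−1}) ∈ ℝ^N there is an open interval I containing x₀ and a solution y on I with y^{(j)}(x₀) = u_j for all 0 ≤ j ≤ N−1; (invariance of the solution set) whenever y is a solution on an open interval I, then for every c ∈ ℝ and every integer 0 ≤ a ≤ N−1 the function x ↦ y(x) + c·x^a is a solution on I, for every c ∈ ℝ the function x ↦ y(x+c) is a solution on the translated interval I − c, and for every λ ≠ 0 the function x ↦ λ·y(x) is a solution on I. Then f is identically zero, i.e. the equation is y^{(N)} = 0. (This is the uniqueness-of-invariant-hypersurface part of Theorem 3.4: y^{(N)} = 0 is the only equation of the form y^{(N)} = f(x, y, y', …, y^{(N−1)}) invariant under the symmetry algebra of y^{(N)} = 0.) -/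
/-- `y` is a solution of `y⁽ᴺ⁾ = f(x, y, y', …, y⁽ᴺ⁻¹⁾)` on the set `I`. -/
def IsSolutionN (N : ℕ) (f : ℝ × (Fin N → ℝ) → ℝ) (y : ℝ → ℝ) (I : Set ℝ) : Prop :=
  (∀ x ∈ I, ∀ j < N, DifferentiableAt ℝ (deriv^[j] y) x) ∧
  ∀ x ∈ I, deriv^[N] y x = f (x, fun j => deriv^[(j : ℕ)] y x)

/-- `I` is an open interval of `ℝ`. -/
def IsOpenInterval (I : Set ℝ) : Prop := IsOpen I ∧ I.OrdConnected

/-! Adding to a solution a polynomial of degree less than `N` does not change its `N`-th derivative,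
and such a polynomial can be chosen to cancel the derivatives of order less than `N` at any given
point `x`. So the value `f (x, u)` is also the `N`-th derivative at `x` of a solution whose
lower-order derivatives vanish there, that is, `f (x, u) = f (x, 0)`. Multiplying such a solution
by `l ≠ 1` multiplies its `N`-th derivative by `l` and keeps the lower-order ones equal to zero,
hence `l * f (x, 0) = f (x, 0)`, so `f (x, 0) = 0`. -/

open Polynomial Set

section Polynomial

theorem exists_degree_lt_and_eval_iterate_derivative_eq {K : Type*} [Field K] [CharZero K]
    (x : K) {n : ℕ} (u : Fin n → K) :
    ∃ P : K[X], P.degree < n ∧ ∀ j : Fin n, (derivative^[j] P).eval x = u j := by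
  obtain ⟨⟨Q, hQ⟩, hcoeff⟩ := (degreeLTEquiv K n).surjective fun j ↦ u j / (j : ℕ).factorial
  refine ⟨taylor (-x) Q, by rwa [degree_taylor, ← mem_degreeLT], fun j ↦ ?_⟩
  have hcoeff_j : Q.coeff j = u j / (j : ℕ).factorial := congrFun hcoeff j
  have hfactorial : ((j : ℕ).factorial : K) ≠ 0 := mod_cast (j : ℕ).factorial_ne_zero
  calc (derivative^[j] (taylor (-x) Q)).eval x
      = (j : ℕ).factorial * (taylor x (taylor (-x) Q)).coeff j := by
        simp [← factorial_smul_hasseDeriv, taylor_coeff]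
    _ = (j : ℕ).factorial * (u j / (j : ℕ).factorial) := by
        rw [taylor_taylor, add_neg_cancel, taylor_zero, hcoeff_j]
    _ = u j := mul_div_cancel₀ _ hfactorial

theorem add_eval_of_forall_add_monomial {R : Type*} [Semiring R] {p : (R → R) → Prop} {n : ℕ}
    (hp : ∀ y, p y → ∀ (c : R) (a : ℕ), a < n → p fun x ↦ y x + c * x ^ a)
    {y : R → R} (hy : p y) {P : R[X]} (hP : P.degree < n) : p fun x ↦ y x + P.eval x := by
  suffices ∀ s ⊆ P.support, p fun x ↦ y x + ∑ a ∈ s, P.coeff a * x ^ a by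
    simpa only [eval_eq_sum, Polynomial.sum] using this P.support subset_rfl
  intro s
  induction s using Finset.induction_on with
  | empty => simpa using hy
  | insert a s ha ih =>
    intro hs
    have ⟨ha_mem, hs_subset⟩ := Finset.insert_subset_iff.mp hs
    have ha_lt : a < n := mod_cast (le_degree_of_mem_supp a ha_mem).trans_lt hP
    simpa only [Finset.sum_insert ha, add_assoc, add_comm (P.coeff a * _)] using
      hp _ (ih hs_subset) (P.coeff a) a ha_lt

end Polynomial

section IterateDeriv

variable {𝕜 : Type*} [NontriviallyNormedField 𝕜]

theorem iterate_deriv_const_mul (l : 𝕜) (y : 𝕜 → 𝕜) (n : ℕ) (x : 𝕜) :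
    deriv^[n] (fun t ↦ l * y t) x = l * deriv^[n] y x := by
  simp only [← iteratedDeriv_eq_iterate, iteratedDeriv_const_mul_field]

theorem iterate_deriv_eval (P : 𝕜[X]) (n : ℕ) :
    deriv^[n] (fun t ↦ P.eval t) = fun t ↦ (derivative^[n] P).eval t := by
  induction n with
  | zero => rfl
  | succ n ih =>
    funext t
    rw [Function.iterate_succ_apply', ih, Polynomial.deriv, Function.iterate_succ_apply']

theorem eqOn_iterate_deriv_add {F : Type*} [NormedAddCommGroup F] [NormedSpace 𝕜 F]
    {y z : 𝕜 → F} {s : Set 𝕜} (hs : IsOpen s) {n : ℕ}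
    (hy : ∀ x ∈ s, ∀ j < n, DifferentiableAt 𝕜 (deriv^[j] y) x)
    (hz : ∀ x ∈ s, ∀ j < n, DifferentiableAt 𝕜 (deriv^[j] z) x) :
    EqOn (deriv^[n] fun t ↦ y t + z t) (fun t ↦ deriv^[n] y t + deriv^[n] z t) s := by
  induction n with
  | zero => exact fun _ _ ↦ rfl
  | succ n ih =>
    intro x hx
    have heq := ih (fun t ht j hj ↦ hy t ht j (hj.trans n.lt_succ_self))
      (fun t ht j hj ↦ hz t ht j (hj.trans n.lt_succ_self))
    simp only [Function.iterate_succ_apply']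
    rw [(heq.eventuallyEq_of_mem (hs.mem_nhds hx)).deriv_eq,
      deriv_fun_add (hy x hx n n.lt_succ_self) (hz x hx n n.lt_succ_self)]

end IterateDeriv

namespace IsSolutionN

variable {N : ℕ} {f : ℝ × (Fin N → ℝ) → ℝ} {y : ℝ → ℝ} {I : Set ℝ} {x l : ℝ}

theorem iterate_deriv_add_eval (hy : IsSolutionN N f y I) (hI : IsOpen I) (hx : x ∈ I)
    (P : ℝ[X]) {j : ℕ} (hj : j ≤ N) :
    deriv^[j] (fun t ↦ y t + P.eval t) x = deriv^[j] y x + (derivative^[j] P).eval x := by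
  have hP : ∀ t ∈ I, ∀ i < j, DifferentiableAt ℝ (deriv^[i] fun s ↦ P.eval s) t := by
    intro t _ i _
    simpa only [iterate_deriv_eval] using (derivative^[i] P).differentiableAt
  rw [eqOn_iterate_deriv_add hI (fun t ht i hi ↦ hy.1 t ht i (hi.trans_le hj)) hP hx,
    iterate_deriv_eval]

theorem iterate_deriv_eq_zero_of_const_mul (hy : IsSolutionN N f y I)
    (hly : IsSolutionN N f (fun t ↦ l * y t) I) (hl : l ≠ 1) (hx : x ∈ I)
    (hjet : ∀ j : Fin N, deriv^[j] y x = 0) : deriv^[N] y x = 0 := by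
  have hfix : l * deriv^[N] y x = deriv^[N] y x :=
    calc l * deriv^[N] y x = f (x, fun j ↦ l * deriv^[j] y x) := by
          simpa only [iterate_deriv_const_mul] using hly.2 x hx
      _ = f (x, fun j ↦ deriv^[j] y x) := by simp only [hjet, mul_zero]
      _ = deriv^[N] y x := (hy.2 x hx).symm
  exact (mul_left_eq_self₀.mp hfix).resolve_left hl

theorem iterate_deriv_eq_zero_of_invariant (hI : IsOpen I)
    (hadd : ∀ z, IsSolutionN N f z I → ∀ (c : ℝ) (a : ℕ), a < N →
      IsSolutionN N f (fun t ↦ z t + c * t ^ a) I)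
    (hl : l ≠ 1) (hmul : ∀ z, IsSolutionN N f z I → IsSolutionN N f (fun t ↦ l * z t) I)
    (hy : IsSolutionN N f y I) (hx : x ∈ I) : deriv^[N] y x = 0 := by
  obtain ⟨P, hdeg, hP⟩ :=
    exists_degree_lt_and_eval_iterate_derivative_eq x fun j : Fin N ↦ -deriv^[j] y x
  have hyP : IsSolutionN N f (fun t ↦ y t + P.eval t) I :=
    add_eval_of_forall_add_monomial (p := (IsSolutionN N f · I)) hadd hy hdeg
  have hjet : ∀ j : Fin N, deriv^[j] (fun t ↦ y t + P.eval t) x = 0 := by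
    intro j
    rw [hy.iterate_deriv_add_eval hI hx P j.is_lt.le, hP, add_neg_cancel]
  have htop : deriv^[N] (fun t ↦ y t + P.eval t) x = deriv^[N] y x := by
    rw [hy.iterate_deriv_add_eval hI hx P le_rfl, iterate_derivative_eq_zero_of_degree_lt hdeg,
      eval_zero, add_zero]
  rw [← htop]
  exact hyP.iterate_deriv_eq_zero_of_const_mul (hmul _ hyP) hl hx hjet

end IsSolutionN

theorem uniqueness_of_invariant_equation_maximal_symmetry_general
    {N : ℕ} {f : ℝ × (Fin N → ℝ) → ℝ}
    (hexist : ∀ (x₀ : ℝ) (u : Fin N → ℝ), ∃ (I : Set ℝ) (y : ℝ → ℝ),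
      IsOpenInterval I ∧ x₀ ∈ I ∧ IsSolutionN N f y I ∧ ∀ j : Fin N, deriv^[j] y x₀ = u j)
    (hadd : ∀ (I : Set ℝ) (y : ℝ → ℝ), IsOpenInterval I → IsSolutionN N f y I →
      ∀ (c : ℝ) (a : ℕ), a < N → IsSolutionN N f (fun x ↦ y x + c * x ^ a) I)
    {l : ℝ} (hl : l ≠ 1)
    (hmul : ∀ (I : Set ℝ) (y : ℝ → ℝ), IsOpenInterval I → IsSolutionN N f y I →
      IsSolutionN N f (fun x ↦ l * y x) I)
    (x : ℝ) (u : Fin N → ℝ) : f (x, u) = 0 := by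
  obtain ⟨I, y, hI, hx, hy, hu⟩ := hexist x u
  calc f (x, u) = f (x, fun j ↦ deriv^[j] y x) := by simp only [hu]
    _ = deriv^[N] y x := (hy.2 x hx).symm
    _ = 0 := IsSolutionN.iterate_deriv_eq_zero_of_invariant hI.1
      (fun z hz ↦ hadd I z hI hz) hl (fun z hz ↦ hmul I z hI hz) hy hx

theorem uniqueness_of_invariant_equation_maximal_symmetry
    (N : ℕ) (hN : 3 ≤ N) (f : ℝ × (Fin N → ℝ) → ℝ)
    (hexist : ∀ x₀ : ℝ, ∀ u : Fin N → ℝ, ∃ I : Set ℝ, ∃ y : ℝ → ℝ,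
      IsOpenInterval I ∧ x₀ ∈ I ∧ IsSolutionN N f y I ∧
      ∀ j : Fin N, deriv^[(j : ℕ)] y x₀ = u j)
    (hinv : ∀ I : Set ℝ, ∀ y : ℝ → ℝ, IsOpenInterval I → IsSolutionN N f y I →
      (∀ c : ℝ, ∀ a : ℕ, a ≤ N - 1 →
        IsSolutionN N f (fun x => y x + c * x ^ a) I) ∧
      (∀ c : ℝ, IsSolutionN N f (fun x => y (x + c)) {x : ℝ | x + c ∈ I}) ∧
      (∀ l : ℝ, l ≠ 0 → IsSolutionN N f (fun x => l * y x) I)) :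
    ∀ (x : ℝ) (u : Fin N → ℝ), f (x, u) = 0 := by
  exact uniqueness_of_invariant_equation_maximal_symmetry_general hexist
    (fun I y hI hy c a ha ↦ (hinv I y hI hy).1 c a (Nat.le_sub_one_of_lt ha))
    (OfNat.ofNat_ne_one 2) (fun I y hI hy ↦ (hinv I y hI hy).2.2 2 two_ne_zero)
end

section
/- Let φ : ℝ → ℝ be three times differentiable with φ''(x) ≠ 0 for all x, and let F : ℝ × ℝ³ → ℝ. Assume: (existence of local solutions with arbitrary initial data) for every x₀ ∈ ℝ and every (u₀,u₁,u₂) ∈ ℝ³ there is an open interval I containing x₀ and a solution y on I with y(x₀)=u₀, y'(x₀)=u₁, y''(x₀)=u₂; (invariance of the solution set) whenever y is a solution on an open interval I, then for every c ∈ ℝ the functions x ↦ y(x)+c, x ↦ y(x)+c·x and x ↦ y(x)+c·φ(x) are solutions on I, and for every λ ≠ 0 the function x ↦ λ·y(x) is a solution on I. Then F(x, u₀, u₁, u₂) = (φ'''(x)/φ''(x))·u₂ for all x, u₀, u₁, u₂, i.e. the equation is y''' = (φ'''/φ'')·y''. (This is the uniqueness-of-invariant-hypersurface part of Theorem 4.1: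 y''' = (φ'''/φ'')y'' is the only third-order equation invariant under the algebra ⟨∂_y, x∂_y, y∂_y, φ(x)∂_y⟩.) -/
/-- `y` is a solution of `y''' = F(x, y, y', y'')` on the set `I`. -/
def IsSolution3 (F : ℝ → ℝ → ℝ → ℝ → ℝ) (y : ℝ → ℝ) (I : Set ℝ) : Prop :=
  (∀ x ∈ I, DifferentiableAt ℝ y x ∧ DifferentiableAt ℝ (deriv y) x ∧
    DifferentiableAt ℝ (deriv^[2] y) x) ∧
  ∀ x ∈ I, deriv^[3] y x = F x (y x) (deriv y x) (deriv^[2] y x)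

/-!
Let `y` be any solution near `x`. Adding to `y` a combination `a + b t + c φ(t)` produces a solution
with an arbitrarily prescribed 2-jet `(u₀, u₁, u₂)` at `x`, because `φ''(x) ≠ 0`, and its third
derivative at `x` is `y'''(x) + r (u₂ - y''(x))` with `r = φ'''(x) / φ''(x)`. Hence
`F(x, u₀, u₁, u₂) = y'''(x) + r (u₂ - y''(x))` for every solution `y` near `x`. Comparing this
formula for `y` and `l y` with `l ≠ 1` gives `y'''(x) = r y''(x)`, so that
`F(x, u₀, u₁, u₂) = r u₂`.
-/

section IterateDeriv

variable {𝕜 E : Type*} [NontriviallyNormedField 𝕜] [NormedAddCommGroup E] [NormedSpace 𝕜 E]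
  {f g : 𝕜 → E} {s : Set 𝕜} {n : ℕ}

theorem eqOn_iterate_deriv_sub (hs : IsOpen s)
    (hf : ∀ k < n, ∀ x ∈ s, DifferentiableAt 𝕜 (deriv^[k] f) x)
    (hg : ∀ k < n, ∀ x ∈ s, DifferentiableAt 𝕜 (deriv^[k] g) x) :
    s.EqOn (deriv^[n] (f - g)) (deriv^[n] f - deriv^[n] g) := by
  induction n with
  | zero => exact fun _ _ => rfl
  | succ n ih =>
    intro x hx
    have h_eqOn := ih (fun k hk => hf k (hk.trans n.lt_succ_self))
      (fun k hk => hg k (hk.trans n.lt_succ_self))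
    simp only [Function.iterate_succ_apply', Pi.sub_apply]
    rw [(h_eqOn.eventuallyEq_of_mem (hs.mem_nhds hx)).deriv_eq,
      deriv_sub (hf n n.lt_succ_self x hx) (hg n n.lt_succ_self x hx)]

theorem iterate_deriv_const_mul_field {𝕜' : Type*} [NormedDivisionRing 𝕜'] [NormedAlgebra 𝕜 𝕜']
    (c : 𝕜') (f : 𝕜 → 𝕜') (n : ℕ) (x : 𝕜) :
    deriv^[n] (fun t => c * f t) x = c * deriv^[n] f x := by
  simpa only [iteratedDeriv_eq_iterate] using iteratedDeriv_const_mul_field c f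

end IterateDeriv

section Solutions

variable {F : ℝ → ℝ → ℝ → ℝ → ℝ} {φ g y : ℝ → ℝ} {I : Set ℝ} {x : ℝ}

theorem IsSolution3.differentiableAt_iterate_deriv (hy : IsSolution3 F y I) (hx : x ∈ I) {k : ℕ}
    (hk : k < 3) : DifferentiableAt ℝ (deriv^[k] y) x := by
  obtain ⟨h₀, h₁, h₂⟩ := hy.1 x hx
  interval_cases k
  exacts [h₀, h₁, h₂]

/-- Addition of `g` maps solutions of `y''' = F(x, y, y', y'')` on `I` to solutions on `I`. The
vector field `g(x) ∂_y` is an infinitesimal symmetry when this holds for all multiples of `g`. -/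
def IsAdditiveSymmetry (F : ℝ → ℝ → ℝ → ℝ → ℝ) (g : ℝ → ℝ) (I : Set ℝ) : Prop :=
  ∀ ⦃y : ℝ → ℝ⦄, IsSolution3 F y I → IsSolution3 F (fun x => y x + g x) I

-- `g = (y + g) - y` inherits the differentiability of the two solutions.
theorem IsAdditiveSymmetry.iterate_deriv_add (hg : IsAdditiveSymmetry F g I) (hI : IsOpen I)
    (hy : IsSolution3 F y I) (hx : x ∈ I) {n : ℕ} (hn : n ≤ 3) :
    deriv^[n] (fun t => y t + g t) x = deriv^[n] y x + deriv^[n] g x := by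
  have h_sub := eqOn_iterate_deriv_sub (n := n) hI
    (fun k hk t ht => (hg hy).differentiableAt_iterate_deriv ht (hk.trans_le hn))
    (fun k hk t ht => hy.differentiableAt_iterate_deriv ht (hk.trans_le hn)) hx
  have h_cancel : (fun t => y t + g t) - y = g := add_sub_cancel_left y g
  rw [h_cancel, Pi.sub_apply] at h_sub
  rw [h_sub, add_sub_cancel]

theorem IsSolution3.exists_iterate_deriv_two_eq (hy : IsSolution3 F y I) (hI : IsOpen I)
    (hx : x ∈ I) (hφ'' : deriv^[2] φ x ≠ 0)
    (h_phi : ∀ c, IsAdditiveSymmetry F (fun t => c * φ t) I) (u₂ : ℝ) :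
    ∃ z, IsSolution3 F z I ∧ deriv^[2] z x = u₂ ∧
      deriv^[3] z x = deriv^[3] y x + deriv^[3] φ x / deriv^[2] φ x * (u₂ - deriv^[2] y x) := by
  set c := (u₂ - deriv^[2] y x) / deriv^[2] φ x with hc
  refine ⟨_, h_phi c hy, ?_, ?_⟩
  · rw [(h_phi c).iterate_deriv_add hI hy hx (by norm_num), iterate_deriv_const_mul_field, hc,
      div_mul_cancel₀ _ hφ'', add_sub_cancel]
  · rw [(h_phi c).iterate_deriv_add hI hy hx le_rfl, iterate_deriv_const_mul_field, hc]
    ring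

theorem IsSolution3.exists_deriv_eq (hy : IsSolution3 F y I) (hI : IsOpen I) (hx : x ∈ I)
    (h_id : ∀ c, IsAdditiveSymmetry F (fun t => c * t) I) (u₁ : ℝ) :
    ∃ z, IsSolution3 F z I ∧ deriv z x = u₁ ∧
      deriv^[2] z x = deriv^[2] y x ∧ deriv^[3] z x = deriv^[3] y x := by
  set c := u₁ - deriv y x with hc
  have h_deriv {n : ℕ} (hn : n ≤ 3) := (h_id c).iterate_deriv_add hI hy hx hn
  refine ⟨_, h_id c hy, (h_deriv (n := 1) (by norm_num)).trans ?_,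
    (h_deriv (n := 2) (by norm_num)).trans ?_, (h_deriv le_rfl).trans ?_⟩ <;>
  simp [hc]

theorem IsSolution3.exists_apply_eq (hy : IsSolution3 F y I)
    (h_const : ∀ c, IsAdditiveSymmetry F (fun _ => c) I) (x u₀ : ℝ) :
    ∃ z, IsSolution3 F z I ∧ z x = u₀ ∧ deriv z = deriv y :=
  ⟨_, h_const (u₀ - y x) hy, add_sub_cancel _ _, deriv_add_const' _⟩

theorem IsSolution3.rhs_eq (hy : IsSolution3 F y I) (hI : IsOpen I) (hx : x ∈ I)
    (hφ'' : deriv^[2] φ x ≠ 0)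
    (h_const : ∀ c, IsAdditiveSymmetry F (fun _ => c) I)
    (h_id : ∀ c, IsAdditiveSymmetry F (fun t => c * t) I)
    (h_phi : ∀ c, IsAdditiveSymmetry F (fun t => c * φ t) I) (u₀ u₁ u₂ : ℝ) :
    F x u₀ u₁ u₂ =
      deriv^[3] y x + deriv^[3] φ x / deriv^[2] φ x * (u₂ - deriv^[2] y x) := by
  obtain ⟨z, hz, hz₂, hz₃⟩ := hy.exists_iterate_deriv_two_eq hI hx hφ'' h_phi u₂
  obtain ⟨v, hv, hv₁, hv₂, hv₃⟩ := hz.exists_deriv_eq hI hx h_id u₁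
  obtain ⟨w, hw, hw₀, hw'⟩ := hv.exists_apply_eq h_const x u₀
  have hw₂ : deriv^[2] w = deriv^[2] v := congrArg deriv hw'
  have hw₃ : deriv^[3] w = deriv^[3] v := congrArg deriv^[2] hw'
  calc F x u₀ u₁ u₂ = F x (w x) (deriv w x) (deriv^[2] w x) := by
        rw [hw₀, hw', hv₁, hw₂, hv₂, hz₂]
    _ = deriv^[3] w x := (hw.2 x hx).symm
    _ = _ := by rw [hw₃, hv₃, hz₃]

theorem uniqueness_of_invariant_equation_dim4_general (hI : IsOpen I) (hx : x ∈ I)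
    (hφ'' : deriv^[2] φ x ≠ 0)
    (h_const : ∀ c, IsAdditiveSymmetry F (fun _ => c) I)
    (h_id : ∀ c, IsAdditiveSymmetry F (fun t => c * t) I)
    (h_phi : ∀ c, IsAdditiveSymmetry F (fun t => c * φ t) I)
    (hy : IsSolution3 F y I) {l : ℝ} (hl : l ≠ 1) (hly : IsSolution3 F (fun t => l * y t) I)
    (u₀ u₁ u₂ : ℝ) : F x u₀ u₁ u₂ = deriv^[3] φ x / deriv^[2] φ x * u₂ := by
  have rhs_y := hy.rhs_eq hI hx hφ'' h_const h_id h_phi u₀ u₁ u₂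
  have rhs_ly := hly.rhs_eq hI hx hφ'' h_const h_id h_phi u₀ u₁ u₂
  simp only [iterate_deriv_const_mul_field] at rhs_ly
  have y_eq : deriv^[3] y x = deriv^[3] φ x / deriv^[2] φ x * deriv^[2] y x :=
    mul_left_cancel₀ (sub_ne_zero.mpr hl) (by linear_combination rhs_y - rhs_ly)
  rw [rhs_y, y_eq]
  ring

end Solutions

theorem uniqueness_of_invariant_equation_dim4
    (φ : ℝ → ℝ)
    (hφ : ∀ x : ℝ, DifferentiableAt ℝ φ x ∧ DifferentiableAt ℝ (deriv φ) x ∧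
      DifferentiableAt ℝ (deriv^[2] φ) x)
    (hφ'' : ∀ x : ℝ, deriv^[2] φ x ≠ 0)
    (F : ℝ → ℝ → ℝ → ℝ → ℝ)
    (hexist : ∀ x₀ u₀ u₁ u₂ : ℝ, ∃ I : Set ℝ, ∃ y : ℝ → ℝ,
      IsOpenInterval I ∧ x₀ ∈ I ∧ IsSolution3 F y I ∧
      y x₀ = u₀ ∧ deriv y x₀ = u₁ ∧ deriv^[2] y x₀ = u₂)
    (hinv : ∀ I : Set ℝ, ∀ y : ℝ → ℝ, IsOpenInterval I → IsSolution3 F y I →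
      (∀ c : ℝ, IsSolution3 F (fun x => y x + c) I) ∧
      (∀ c : ℝ, IsSolution3 F (fun x => y x + c * x) I) ∧
      (∀ c : ℝ, IsSolution3 F (fun x => y x + c * φ x) I) ∧
      (∀ l : ℝ, l ≠ 0 → IsSolution3 F (fun x => l * y x) I)) :
    ∀ x u₀ u₁ u₂ : ℝ, F x u₀ u₁ u₂ = (deriv^[3] φ x / deriv^[2] φ x) * u₂ := by
  intro x u₀ u₁ u₂
  obtain ⟨I, y, hI, hx, hy, -⟩ := hexist x u₀ u₁ u₂
  exact uniqueness_of_invariant_equation_dim4_general hI.1 hx (hφ'' x)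
    (fun c _ hz => (hinv I _ hI hz).1 c) (fun c _ hz => (hinv I _ hI hz).2.1 c)
    (fun c _ hz => (hinv I _ hI hz).2.2.1 c) hy (OfNat.ofNat_ne_one 2)
    ((hinv I y hI hy).2.2.2 2 two_ne_zero) u₀ u₁ u₂
end

section
/- Let λ, μ be nonzero real numbers with λ ≠ μ, and let F : ℝ × ℝ³ → ℝ. Assume: (existence of local solutions with arbitrary initial data) for every x₀ ∈ ℝ and every (u₀,u₁,u₂) ∈ ℝ³ there is an open interval I containing x₀ and a solution y on I with y(x₀)=u₀, y'(x₀)=u₁, y''(x₀)=u₂; (invariance of the solution set) whenever y is a solution on an open interval I, then for every c ∈ ℝ the functions x ↦ y(x)+c, x ↦ y(x)+c·e^{λx} and x ↦ y(x)+c·e^{μx} are solutions on I, for every c ∈ ℝ the function x ↦ y(x+c) is a solution on I − c, and for every κ ≠ 0 the function x ↦ κ·y(x) is a solution on I. Then F(x, u₀, u₁, u₂) = (λ+μ)·u₂ − λμ·u₁ for all x, u₀, u₁, u₂, i.e. the equation is y''' − (λ+μ)y'' + λμ y' = 0. (This is the uniqueness-of-invariant-hypersurface part of Theorem 4.2.)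 -/
/-!
Every solution `y` near `x` can be corrected by a combination `φ` of the three exponentials so that
`y + φ` has any prescribed 2-jet at `x`. The exponentials solve a linear third-order equation with
coefficients `p`, so `F x` differs from the linear form `p` by a constant that does not depend on
the 2-jet. Scaling a solution by `κ ≠ 1` multiplies this constant by `κ`, hence it vanishes.
-/

open Real Set

theorem eqOn_iterate_deriv_add_s2 {𝕜 E : Type*} [NontriviallyNormedField 𝕜] [NormedAddCommGroup E]
    [NormedSpace 𝕜 E] {f g : 𝕜 → E} {s : Set 𝕜} (hs : IsOpen s) {n : ℕ}
    (hf : ∀ k < n, ∀ x ∈ s, DifferentiableAt 𝕜 (deriv^[k] f) x)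
    (hg : ∀ k < n, ∀ x ∈ s, DifferentiableAt 𝕜 (deriv^[k] g) x) :
    EqOn (deriv^[n] (f + g)) (deriv^[n] f + deriv^[n] g) s := by
  induction n with
  | zero => exact fun _ _ => rfl
  | succ n ih =>
    have ih := ih (fun k hk => hf k (hk.trans n.lt_succ_self))
      (fun k hk => hg k (hk.trans n.lt_succ_self))
    intro x hx
    simp only [Function.iterate_succ_apply', Pi.add_apply]
    exact (ih.deriv hs hx).trans (deriv_add (hf n n.lt_succ_self x hx) (hg n n.lt_succ_self x hx))

section ExpSum

variable {ι : Type*} [Fintype ι] (r c : ι → ℝ)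

/-- The exponential sum with exponents `r` and coefficients `c`. For fixed `r` these sums are the
functions that may be added to a solution of the invariant equation. -/
noncomputable def expSum (x : ℝ) : ℝ := ∑ i, c i * exp (r i * x)

theorem contDiff_expSum {n : WithTop ℕ∞} : ContDiff ℝ n (expSum r c) := by
  unfold expSum
  fun_prop

theorem deriv_expSum : deriv (expSum r c) = expSum r (c * r) := by
  funext x
  refine (HasDerivAt.fun_sum fun i _ =>
    ((hasDerivAt_id x).const_mul (r i)).exp.const_mul (c i)).deriv.trans ?_
  exact Finset.sum_congr rfl fun i _ => by simp only [id, Pi.mul_apply]; ring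

theorem iterate_deriv_expSum (n : ℕ) : deriv^[n] (expSum r c) = expSum r (c * r ^ n) := by
  induction n with
  | zero => simp
  | succ n ih => rw [Function.iterate_succ_apply', ih, deriv_expSum, pow_succ, mul_assoc]

variable {r} in
theorem iterate_deriv_expSum_eq_sum {m n : ℕ} {p : Fin n → ℝ}
    (hr : ∀ i, r i ^ m = ∑ k, p k * r i ^ (k : ℕ)) (x : ℝ) :
    deriv^[m] (expSum r c) x = ∑ k, p k * deriv^[k] (expSum r c) x := by
  simp only [iterate_deriv_expSum, expSum, Pi.mul_apply, Pi.pow_apply, hr, Finset.mul_sum,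
    Finset.sum_mul]
  rw [Finset.sum_comm]
  exact Finset.sum_congr rfl fun k _ => Finset.sum_congr rfl fun i _ => by ring

theorem exists_iterate_deriv_expSum_eq {n : ℕ} {r : Fin n → ℝ} (hr : Function.Injective r)
    (x : ℝ) (u : Fin n → ℝ) : ∃ c, ∀ k : Fin n, deriv^[k] (expSum r c) x = u k := by
  have hunit : IsUnit (Matrix.vandermonde r) :=
    (Matrix.isUnit_iff_isUnit_det _).2 (Matrix.det_vandermonde_ne_zero_iff.2 hr).isUnit
  obtain ⟨d, hd⟩ := Matrix.vecMul_surjective_iff_isUnit.2 hunit u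
  refine ⟨fun i => d i * exp (-(r i * x)), fun k => ?_⟩
  rw [iterate_deriv_expSum, ← hd]
  refine Finset.sum_congr rfl fun i _ => ?_
  have hexp : exp (-(r i * x)) * exp (r i * x) = 1 := by rw [← exp_add, neg_add_cancel, exp_zero]
  simp only [Pi.mul_apply, Pi.pow_apply, Matrix.vandermonde_apply]
  linear_combination d i * r i ^ (k : ℕ) * hexp

end ExpSum

/-- The transformation `T` of functions is a symmetry of `y''' = F(x, y, y', y'')` that fixes the
independent variable: it maps solutions on an open interval to solutions on the same interval. -/
def PreservesSolutions (F : ℝ → ℝ → ℝ → ℝ → ℝ) (T : (ℝ → ℝ) → ℝ → ℝ) : Prop :=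
  ∀ I y, IsOpenInterval I → IsSolution3 F y I → IsSolution3 F (T y) I

section Invariance

variable {F : ℝ → ℝ → ℝ → ℝ → ℝ} {I : Set ℝ} {x : ℝ} {y : ℝ → ℝ}

theorem IsSolution3.apply_add {φ : ℝ → ℝ} (hy : IsSolution3 F y I) (hI : IsOpen I) (hx : x ∈ I)
    (hφ : ContDiff ℝ 3 φ) (hyφ : IsSolution3 F (y + φ) I) :
    F x (y x + φ x) (deriv y x + deriv φ x) (deriv^[2] y x + deriv^[2] φ x) =
      deriv^[3] y x + deriv^[3] φ x := by
  have hy_diff : ∀ k < 3, ∀ t ∈ I, DifferentiableAt ℝ (deriv^[k] y) t := by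
    intro k hk t ht
    obtain ⟨h0, h1, h2⟩ := hy.1 t ht
    interval_cases k <;> assumption
  have hφ_diff : ∀ k < 3, ∀ t ∈ I, DifferentiableAt ℝ (deriv^[k] φ) t := by
    intro k hk t _
    rw [← iteratedDeriv_eq_iterate]
    exact (hφ.differentiable_iteratedDeriv k (mod_cast hk)).differentiableAt
  have hadd : ∀ k ≤ 3, deriv^[k] (y + φ) x = deriv^[k] y x + deriv^[k] φ x := fun k hk =>
    eqOn_iterate_deriv_add_s2 hI (fun j hj => hy_diff j (hj.trans_le hk))
      (fun j hj => hφ_diff j (hj.trans_le hk)) hx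
  have hadd_one : deriv (y + φ) x = deriv y x + deriv φ x := hadd 1 (by norm_num)
  rw [← hadd_one, ← hadd 2 (by norm_num), ← hadd 3 le_rfl]
  exact (hyφ.2 x hx).symm

theorem IsSolution3.apply_const_mul {κ : ℝ} (hκy : IsSolution3 F (fun x => κ * y x) I)
    (hx : x ∈ I) :
    F x (κ * y x) (κ * deriv y x) (κ * deriv^[2] y x) = κ * deriv^[3] y x := by
  have h := hκy.2 x hx
  simp only [← iteratedDeriv_eq_iterate, iteratedDeriv_const_mul_field,
    deriv_const_mul_field] at h ⊢
  exact h.symm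

theorem IsSolution3.exists_eq_linear_add_const {V : Set (ℝ → ℝ)} {p : Fin 3 → ℝ}
    (hy : IsSolution3 F y I) (hI : IsOpenInterval I) (hx : x ∈ I)
    (hsmooth : ∀ φ ∈ V, ContDiff ℝ 3 φ)
    (hjet : ∀ u : Fin 3 → ℝ, ∃ φ ∈ V, ∀ k : Fin 3, deriv^[k] φ x = u k)
    (hlinear : ∀ φ ∈ V, deriv^[3] φ x = ∑ k, p k * deriv^[k] φ x)
    (hadd : ∀ φ ∈ V, PreservesSolutions F (· + φ)) :
    ∃ ρ, ∀ u : Fin 3 → ℝ, F x (u 0) (u 1) (u 2) = ∑ k, p k * u k + ρ := by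
  refine ⟨deriv^[3] y x - ∑ k : Fin 3, p k * deriv^[k] y x, fun u => ?_⟩
  obtain ⟨φ, hφV, hφ⟩ := hjet fun k => u k - deriv^[k] y x
  have hjet_add : ∀ k : Fin 3, u k = deriv^[k] y x + deriv^[k] φ x := fun k => by
    rw [hφ, add_sub_cancel]
  calc F x (u 0) (u 1) (u 2)
      = F x (y x + φ x) (deriv y x + deriv φ x) (deriv^[2] y x + deriv^[2] φ x) := by
        rw [hjet_add 0, hjet_add 1, hjet_add 2]; rfl
    _ = deriv^[3] y x + deriv^[3] φ x := hy.apply_add hI.1 hx (hsmooth φ hφV) (hadd φ hφV I y hI hy)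
    _ = ∑ k, p k * u k + (deriv^[3] y x - ∑ k : Fin 3, p k * deriv^[k] y x) := by
        simp only [hlinear φ hφV, hφ, mul_sub, Finset.sum_sub_distrib]; ring

theorem IsSolution3.eq_linear_of_preservesSolutions {V : Set (ℝ → ℝ)} {p : Fin 3 → ℝ} {κ : ℝ}
    (hy : IsSolution3 F y I) (hI : IsOpenInterval I) (hx : x ∈ I)
    (hsmooth : ∀ φ ∈ V, ContDiff ℝ 3 φ)
    (hjet : ∀ u : Fin 3 → ℝ, ∃ φ ∈ V, ∀ k : Fin 3, deriv^[k] φ x = u k)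
    (hlinear : ∀ φ ∈ V, deriv^[3] φ x = ∑ k, p k * deriv^[k] φ x)
    (hadd : ∀ φ ∈ V, PreservesSolutions F (· + φ))
    (hκ : κ ≠ 1) (hmul : PreservesSolutions F fun y x => κ * y x) (u : Fin 3 → ℝ) :
    F x (u 0) (u 1) (u 2) = ∑ k, p k * u k := by
  obtain ⟨ρ, hρ⟩ := hy.exists_eq_linear_add_const hI hx hsmooth hjet hlinear hadd
  have hF : deriv^[3] y x = ∑ k : Fin 3, p k * deriv^[k] y x + ρ :=
    (hy.2 x hx).trans (hρ fun k => deriv^[k] y x)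
  have hκF : κ * deriv^[3] y x = ∑ k : Fin 3, p k * (κ * deriv^[k] y x) + ρ :=
    ((hmul I y hI hy).apply_const_mul hx).symm.trans (hρ fun k => κ * deriv^[k] y x)
  have hρ_mul : (κ - 1) * ρ = 0 := by
    simp only [mul_left_comm _ κ, ← Finset.mul_sum] at hκF
    linear_combination hκF - κ * hF
  rw [hρ, (mul_eq_zero.1 hρ_mul).resolve_left (sub_ne_zero.2 hκ), add_zero]

theorem preservesSolutions_add_expSum {ι : Type*} [Fintype ι] {r : ι → ℝ}
    (hadd : ∀ i c, PreservesSolutions F fun y x => y x + c * exp (r i * x)) (c : ι → ℝ) :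
    PreservesSolutions F (· + expSum r c) := by
  classical
  intro I y hI hy
  suffices h : ∀ s : Finset ι, IsSolution3 F (fun x => y x + ∑ i ∈ s, c i * exp (r i * x)) I from
    h Finset.univ
  intro s
  induction s using Finset.induction_on with
  | empty => simpa using hy
  | insert i s hi ih =>
    have hstep := hadd i (c i) I _ hI ih
    simpa only [Finset.sum_insert hi, add_assoc, add_comm (c i * _)] using hstep

end Invariance

theorem uniqueness_of_invariant_equation_dim5_real_distinct_general
    {a b c : ℝ} (hab : a ≠ b) (hac : a ≠ c) (hbc : b ≠ c) {F : ℝ → ℝ → ℝ → ℝ → ℝ}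
    (hexist : ∀ x, ∃ I y, IsOpenInterval I ∧ x ∈ I ∧ IsSolution3 F y I)
    (ha : ∀ d, PreservesSolutions F fun y x => y x + d * exp (a * x))
    (hb : ∀ d, PreservesSolutions F fun y x => y x + d * exp (b * x))
    (hc : ∀ d, PreservesSolutions F fun y x => y x + d * exp (c * x))
    {κ : ℝ} (hκ : κ ≠ 1) (hmul : PreservesSolutions F fun y x => κ * y x) (x u₀ u₁ u₂ : ℝ) :
    F x u₀ u₁ u₂ = (a + b + c) * u₂ - (a * b + a * c + b * c) * u₁ + a * b * c * u₀ := by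
  let r : Fin 3 → ℝ := ![a, b, c]
  let p : Fin 3 → ℝ := ![a * b * c, -(a * b + a * c + b * c), a + b + c]
  have hr : Function.Injective r := by
    simp [r, Function.Injective, Fin.forall_fin_succ, hab, hac, hbc, hab.symm, hac.symm, hbc.symm]
  have hroot : ∀ i, r i ^ 3 = ∑ k, p k * r i ^ (k : ℕ) := by
    intro i
    fin_cases i <;> simp [r, p, Fin.sum_univ_three] <;> ring
  have hadd : ∀ i d, PreservesSolutions F fun y x => y x + d * exp (r i * x) :=
    Fin.forall_fin_succ.2 ⟨ha, Fin.forall_fin_two.2 ⟨hb, hc⟩⟩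
  obtain ⟨I, y, hI, hx, hy⟩ := hexist x
  have hF := hy.eq_linear_of_preservesSolutions (V := range (expSum r)) hI hx
    (forall_mem_range.2 fun d => contDiff_expSum r d)
    (fun u => exists_range_iff.2 (exists_iterate_deriv_expSum_eq hr x u))
    (forall_mem_range.2 fun d => iterate_deriv_expSum_eq_sum d hroot x)
    (forall_mem_range.2 (preservesSolutions_add_expSum hadd)) hκ hmul ![u₀, u₁, u₂]
  simp only [p, Fin.sum_univ_three, Matrix.cons_val] at hF
  linear_combination hF

theorem uniqueness_of_invariant_equation_dim5_real_distinct
    (lam mu : ℝ) (hlam : lam ≠ 0) (hmu : mu ≠ 0) (hne : lam ≠ mu)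
    (F : ℝ → ℝ → ℝ → ℝ → ℝ)
    (hexist : ∀ x₀ u₀ u₁ u₂ : ℝ, ∃ I : Set ℝ, ∃ y : ℝ → ℝ,
      IsOpenInterval I ∧ x₀ ∈ I ∧ IsSolution3 F y I ∧
      y x₀ = u₀ ∧ deriv y x₀ = u₁ ∧ deriv^[2] y x₀ = u₂)
    (hinv : ∀ I : Set ℝ, ∀ y : ℝ → ℝ, IsOpenInterval I → IsSolution3 F y I →
      (∀ c : ℝ, IsSolution3 F (fun x => y x + c) I) ∧
      (∀ c : ℝ, IsSolution3 F (fun x => y x + c * Real.exp (lam * x)) I) ∧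
      (∀ c : ℝ, IsSolution3 F (fun x => y x + c * Real.exp (mu * x)) I) ∧
      (∀ c : ℝ, IsSolution3 F (fun x => y (x + c)) {x : ℝ | x + c ∈ I}) ∧
      (∀ κ : ℝ, κ ≠ 0 → IsSolution3 F (fun x => κ * y x) I)) :
    ∀ x u₀ u₁ u₂ : ℝ, F x u₀ u₁ u₂ = (lam + mu) * u₂ - lam * mu * u₁ := by
  simpa using uniqueness_of_invariant_equation_dim5_real_distinct_general hlam.symm hmu.symm hne
    (fun x => let ⟨I, y, hI, hx, hy, _⟩ := hexist x 0 0 0; ⟨I, y, hI, hx, hy⟩)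
    (fun c I y hI hy => by simpa using (hinv I y hI hy).1 c)
    (fun c I y hI hy => (hinv I y hI hy).2.1 c) (fun c I y hI hy => (hinv I y hI hy).2.2.1 c)
    (OfNat.ofNat_ne_one 2) (fun I y hI hy => (hinv I y hI hy).2.2.2.2 2 two_ne_zero)
end

section
/- Let N ≥ 3 be an integer and consider the N+4 smooth vector fields on ℝ²: X(x,y) = (1, 0), H(x,y) = (−2x, −(N−1)y), Y(x,y) = (−x², −(N−1)xy), W_k(x,y) = (0, x^k) for 0 ≤ k ≤ N−1, and T(x,y) = (0, y). Then: (a) the real linear span of these N+4 vector fields is closed under the Lie bracket of vector fields (hence is a Lie subalgebra of the vector fields on ℝ²); (b) these N+4 vector fields are linearly independent over ℝ, so this Lie algebra has dimension N+4; and (c) the N vector fields W_0, …, W_{N−1} pairwise commute, so their span is an N-dimensional abelian subalgebra. (This is the structure of the symmetry algebra (3.1) of the equation y^{(N)} = 0 described in Section 3, including the N-dimensional abelian subalgebra required by the Mahomed–Leach linearizability criterion.) -/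
open VectorField

/-! All the fields have the form `f(x) ∂ₓ + (g(x) y + h(x)) ∂ᵧ` with polynomials `f`, `g`, `h`. Such
a field determines the triple `(f, g, h)`, and the Lie bracket acts on triples by an alternating
bilinear formula, so that independence is read off from coefficients and closure from the bracket
table of the generators. In this table the only bracket that could leave the span is
`[Y, W_{N-1}] = ((N - 1) - (N - 1)) W_N`, which vanishes. -/

open Polynomial Submodule

section Bilinear

variable {R M : Type*} [CommSemiring R] [AddCommMonoid M] [Module R M]

theorem apply_mem_span_of_isAlt_of_pairwise {B : M →ₗ[R] M →ₗ[R] M} (hB : B.IsAlt) {s : Set M}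
    (hs : s.Pairwise fun u v => B u v ∈ span R s) {u v : M} (hu : u ∈ span R s)
    (hv : v ∈ span R s) : B u v ∈ span R s := by
  have image_subset : Set.image2 (fun u v => B u v) s s ⊆ span R s := by
    rintro _ ⟨a, ha, b, hb, rfl⟩
    obtain rfl | hab := eq_or_ne a b
    · simp [hB.self_eq_zero]
    · exact hs ha hb hab
  have map_le : map₂ B (span R s) (span R s) ≤ span R s := by
    rw [map₂_span_span]
    exact span_le.2 image_subset
  exact map_le (apply_mem_map₂ B hu hv)

end Bilinear

/-- The coefficients `(f, g, h)` of the plane vector field `f(x) ∂ₓ + (g(x) y + h(x)) ∂ᵧ`, which is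
polynomial in `x` and affine along the fibres of the projection to the `x`-axis. -/
abbrev FiberAffineCoeffs (R : Type*) [CommRing R] : Type _ := R[X] × R[X] × R[X]

namespace FiberAffineCoeffs

section Bracket

variable {R : Type*} [CommRing R]

/-- The vector field `f(x) ∂ₓ + (g(x) y + h(x)) ∂ᵧ` with coefficients `(f, g, h)`, as a map of
the plane to itself. -/
def toField (R : Type*) [CommRing R] : FiberAffineCoeffs R →ₗ[R] (R × R → R × R) where
  toFun u p := (u.1.eval p.1, u.2.1.eval p.1 * p.2 + u.2.2.eval p.1)
  map_add' u v := by ext p <;> simp; ring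
  map_smul' r u := by ext p <;> simp; ring

theorem toField_apply (u : FiberAffineCoeffs R) (p : R × R) :
    toField R u p = (u.1.eval p.1, u.2.1.eval p.1 * p.2 + u.2.2.eval p.1) := rfl

theorem toField_injective [IsDomain R] [Infinite R] : Function.Injective (toField R) := by
  rw [injective_iff_map_eq_zero]
  intro u hu
  have eval_eq_zero (x y : R) : u.1.eval x = 0 ∧ u.2.1.eval x * y + u.2.2.eval x = 0 := by
    simpa [toField_apply] using congrFun hu (x, y)
  have shift_eval (x : R) : u.2.2.eval x = 0 := by simpa using (eval_eq_zero x 0).2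
  have slope_eval (x : R) : u.2.1.eval x = 0 := by
    simpa [shift_eval x] using (eval_eq_zero x 1).2
  refine Prod.ext (funext fun x => ?_) (Prod.ext (funext fun x => ?_) (funext fun x => ?_))
  · simpa using (eval_eq_zero x 0).1
  · simpa using slope_eval x
  · simpa using shift_eval x

/-- The Lie bracket of vector fields in terms of coefficients, as a bilinear map; it agrees with
`VectorField.lieBracket` by `lieBracket_toField`. -/
noncomputable def bracket (R : Type*) [CommRing R] :
    FiberAffineCoeffs R →ₗ[R] FiberAffineCoeffs R →ₗ[R] FiberAffineCoeffs R :=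
  LinearMap.mk₂ R
    (fun u v => (u.1 * derivative v.1 - v.1 * derivative u.1,
      u.1 * derivative v.2.1 - v.1 * derivative u.2.1,
      u.1 * derivative v.2.2 - v.1 * derivative u.2.2 + (v.2.1 * u.2.2 - u.2.1 * v.2.2)))
    (fun u u' v => by refine Prod.ext ?_ (Prod.ext ?_ ?_) <;> simp <;> ring)
    (fun r u v => by simp [smul_sub, smul_add])
    (fun u v v' => by refine Prod.ext ?_ (Prod.ext ?_ ?_) <;> simp <;> ring)
    (fun r u v => by simp [smul_sub, smul_add])

theorem bracket_apply (u v : FiberAffineCoeffs R) :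
    bracket R u v = (u.1 * derivative v.1 - v.1 * derivative u.1,
      u.1 * derivative v.2.1 - v.1 * derivative u.2.1,
      u.1 * derivative v.2.2 - v.1 * derivative u.2.2 + (v.2.1 * u.2.2 - u.2.1 * v.2.2)) := rfl

theorem bracket_isAlt : (bracket R).IsAlt := fun u => by simp [bracket_apply]

end Bracket

section LieBracket

variable {𝕜 : Type*} [NontriviallyNormedField 𝕜]

theorem fderiv_toField_apply (u : FiberAffineCoeffs 𝕜) (p q : 𝕜 × 𝕜) :
    fderiv 𝕜 (toField 𝕜 u) p q =
      ((derivative u.1).eval p.1 * q.1,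
        ((derivative u.2.1).eval p.1 * p.2 + (derivative u.2.2).eval p.1) * q.1 +
          u.2.1.eval p.1 * q.2) := by
  have eval_fst (f : 𝕜[X]) : HasFDerivAt (fun q : 𝕜 × 𝕜 => f.eval q.1)
      ((derivative f).eval p.1 • ContinuousLinearMap.fst 𝕜 𝕜 𝕜) p :=
    (f.hasDerivAt p.1).comp_hasFDerivAt p hasFDerivAt_fst
  have field : HasFDerivAt (toField 𝕜 u) _ p :=
    (eval_fst u.1).prodMk (((eval_fst u.2.1).mul hasFDerivAt_snd).add (eval_fst u.2.2))
  rw [field.fderiv]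
  ext <;> simp
  ring

theorem lieBracket_toField (u v : FiberAffineCoeffs 𝕜) :
    lieBracket 𝕜 (toField 𝕜 u) (toField 𝕜 v) = toField 𝕜 (bracket 𝕜 u v) := by
  funext p
  simp only [lieBracket, fderiv_toField_apply, toField_apply, bracket_apply]
  ext <;> simp <;> ring

theorem lieBracket_mem_map_toField {S : Submodule 𝕜 (FiberAffineCoeffs 𝕜)}
    (hS : ∀ u ∈ S, ∀ v ∈ S, bracket 𝕜 u v ∈ S) {V W : 𝕜 × 𝕜 → 𝕜 × 𝕜}
    (hV : V ∈ S.map (toField 𝕜)) (hW : W ∈ S.map (toField 𝕜)) :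
    lieBracket 𝕜 V W ∈ S.map (toField 𝕜) := by
  obtain ⟨u, hu, rfl⟩ := hV
  obtain ⟨v, hv, rfl⟩ := hW
  exact ⟨bracket 𝕜 u v, hS u hu v hv, (lieBracket_toField u v).symm⟩

end LieBracket

section Generators

variable {R : Type*} [CommRing R]

/-- The translation `X = ∂ₓ`. -/
noncomputable def translation : FiberAffineCoeffs R := (1, 0, 0)

/-- The dilation `H = -2x ∂ₓ - c y ∂ᵧ`, where the weight `c` of `y` is `N - 1` for the equation
`y^(N) = 0`. -/
noncomputable def dilation (c : R) : FiberAffineCoeffs R := (-2 * X, -C c, 0)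

/-- The projective field `Y = -x² ∂ₓ - c x y ∂ᵧ`, completing `translation` and `dilation c` to an
`sl₂`-triple. -/
noncomputable def projective (c : R) : FiberAffineCoeffs R := (-X ^ 2, -C c * X, 0)

/-- The field `W_k = x^k ∂ᵧ`, the infinitesimal addition of the solution `x^k`. -/
noncomputable def solutionShift (k : ℕ) : FiberAffineCoeffs R := (0, 0, X ^ k)

/-- The vertical scaling `T = y ∂ᵧ`. -/
noncomputable def verticalScaling : FiberAffineCoeffs R := (0, 1, 0)

theorem bracket_translation_dilation (c : R) :
    bracket R translation (dilation c) = (-2 : R) • translation := by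
  simp [bracket_apply, translation, dilation, smul_eq_C_mul, C_ofNat]

theorem bracket_translation_projective (c : R) :
    bracket R translation (projective c) = dilation c := by
  simp [bracket_apply, translation, dilation, projective, one_add_one_eq_two, C_ofNat]

theorem bracket_translation_verticalScaling :
    bracket R translation verticalScaling = 0 := by
  simp [bracket_apply, translation, verticalScaling]

theorem bracket_translation_solutionShift (k : ℕ) :
    bracket R translation (solutionShift k) = (k : R) • solutionShift (k - 1) := by
  simp [bracket_apply, translation, solutionShift, smul_eq_C_mul, derivative_X_pow]

theorem bracket_dilation_projective (c : R) :
    bracket R (dilation c) (projective c) = (-2 : R) • projective c := by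
  refine Prod.ext ?_ (Prod.ext ?_ ?_) <;>
    simp [bracket_apply, dilation, projective, smul_eq_C_mul, C_ofNat] <;> ring

theorem bracket_dilation_verticalScaling (c : R) :
    bracket R (dilation c) verticalScaling = 0 := by
  simp [bracket_apply, dilation, verticalScaling]

theorem bracket_dilation_solutionShift (c : R) (k : ℕ) :
    bracket R (dilation c) (solutionShift k) = (c - 2 * k) • solutionShift k := by
  cases k <;> simp [bracket_apply, dilation, solutionShift, smul_eq_C_mul, C_ofNat]
  ring

theorem bracket_projective_verticalScaling (c : R) :
    bracket R (projective c) verticalScaling = 0 := by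
  simp [bracket_apply, projective, verticalScaling]

theorem bracket_projective_solutionShift (c : R) (k : ℕ) :
    bracket R (projective c) (solutionShift k) = (c - k) • solutionShift (k + 1) := by
  cases k <;> simp [bracket_apply, projective, solutionShift, smul_eq_C_mul]
  ring

theorem bracket_verticalScaling_solutionShift (k : ℕ) :
    bracket R verticalScaling (solutionShift k) = -solutionShift k := by
  simp [bracket_apply, verticalScaling, solutionShift]

theorem bracket_solutionShift_solutionShift (j k : ℕ) :
    bracket R (solutionShift j) (solutionShift k) = 0 := by
  simp [bracket_apply, solutionShift]

/-- The coefficients of the generators `W_0, …, W_{N-1}, X, H, Y, T` of the symmetry algebra of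
`y^(N) = 0`. -/
noncomputable def symmetryGenerators (R : Type*) [CommRing R] (N : ℕ) :
    Fin N ⊕ Fin 4 → FiberAffineCoeffs R :=
  Sum.elim (fun k => solutionShift k)
    ![translation, dilation (N - 1), projective (N - 1), verticalScaling]

theorem range_symmetryGenerators (N : ℕ) :
    Set.range (symmetryGenerators R N) =
      insert translation (insert (dilation (N - 1 : R)) (insert (projective (N - 1 : R))
        (insert verticalScaling (Set.range fun k : Fin N => solutionShift (k : ℕ))))) := by
  rw [symmetryGenerators, Set.Sum.elim_range, Set.union_comm]
  simp only [Matrix.range_cons, Matrix.range_empty, Set.union_empty, Set.singleton_union,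
    Set.insert_union]

theorem bracket_projective_solutionShift_mem {N : ℕ} {S : Submodule R (FiberAffineCoeffs R)}
    (hS : ∀ k < N, solutionShift k ∈ S) {k : ℕ} (hk : k < N) :
    bracket R (projective (N - 1 : R)) (solutionShift k) ∈ S := by
  rw [bracket_projective_solutionShift]
  obtain succ_lt | rfl : k + 1 < N ∨ N = k + 1 := by omega
  · exact smul_mem _ _ (hS _ succ_lt)
  · simp

theorem pairwise_bracket_symmetryGenerators_mem {N : ℕ}
    {S : Submodule R (FiberAffineCoeffs R)} (translation_mem : translation ∈ S)
    (dilation_mem : dilation (N - 1 : R) ∈ S) (projective_mem : projective (N - 1 : R) ∈ S)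
    (solutionShift_mem : ∀ k < N, solutionShift k ∈ S) :
    (Set.range (symmetryGenerators R N)).Pairwise fun u v => bracket R u v ∈ S := by
  have symm : Std.Symm fun u v : FiberAffineCoeffs R => bracket R u v ∈ S :=
    ⟨fun u v h => by rw [← bracket_isAlt.neg]; exact neg_mem h⟩
  simp only [range_symmetryGenerators, Set.pairwise_insert_of_symm, Set.forall_mem_insert,
    Set.forall_mem_range]
  refine ⟨⟨⟨⟨?_, fun k _ => ?_⟩, fun _ => ?_, fun k _ => ?_⟩,
    fun _ => ?_, fun _ => ?_, fun k _ => ?_⟩, fun _ => ?_, fun _ => ?_, fun _ => ?_, fun k _ => ?_⟩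
  · rintro _ ⟨j, rfl⟩ _ ⟨k, rfl⟩ _
    simp only [bracket_solutionShift_solutionShift, zero_mem]
  · rw [bracket_verticalScaling_solutionShift]
    exact neg_mem (solutionShift_mem k k.isLt)
  · rw [bracket_projective_verticalScaling]
    exact zero_mem S
  · exact bracket_projective_solutionShift_mem solutionShift_mem k.isLt
  · rw [bracket_dilation_projective]
    exact smul_mem S _ projective_mem
  · rw [bracket_dilation_verticalScaling]
    exact zero_mem S
  · rw [bracket_dilation_solutionShift]
    exact smul_mem S _ (solutionShift_mem k k.isLt)
  · rw [bracket_translation_dilation]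
    exact smul_mem S _ translation_mem
  · rwa [bracket_translation_projective]
  · rw [bracket_translation_verticalScaling]
    exact zero_mem S
  · rw [bracket_translation_solutionShift]
    exact smul_mem S _ (solutionShift_mem _ (by omega))

theorem bracket_mem_span_symmetryGenerators (N : ℕ) {u v : FiberAffineCoeffs R}
    (hu : u ∈ span R (Set.range (symmetryGenerators R N)))
    (hv : v ∈ span R (Set.range (symmetryGenerators R N))) :
    bracket R u v ∈ span R (Set.range (symmetryGenerators R N)) := by
  refine apply_mem_span_of_isAlt_of_pairwise bracket_isAlt ?_ hu hv
  exact pairwise_bracket_symmetryGenerators_mem (subset_span ⟨.inr 0, rfl⟩)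
    (subset_span ⟨.inr 1, rfl⟩) (subset_span ⟨.inr 2, rfl⟩)
    fun k hk => subset_span ⟨.inl ⟨k, hk⟩, rfl⟩

theorem sum_smul_symmetryGenerators {N : ℕ} (a : Fin N ⊕ Fin 4 → R) :
    ∑ i, a i • symmetryGenerators R N i =
      (C (a (.inr 0)) - C (a (.inr 1)) * (2 * X) - C (a (.inr 2)) * X ^ 2,
        C (a (.inr 3)) - C (N - 1 : R) * (C (a (.inr 1)) + C (a (.inr 2)) * X),
        ∑ k : Fin N, C (a (.inl k)) * X ^ (k : ℕ)) := by
  simp only [Fintype.sum_sum_type, Fin.sum_univ_four, symmetryGenerators, Sum.elim_inl,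
    Sum.elim_inr, Matrix.cons_val, translation, dilation, projective, verticalScaling,
    solutionShift]
  refine Prod.ext ?_ (Prod.ext ?_ ?_) <;> simp [Prod.fst_sum, Prod.snd_sum, smul_eq_C_mul] <;> ring

theorem linearIndependent_symmetryGenerators [NoZeroDivisors R] [NeZero (2 : R)] (N : ℕ) :
    LinearIndependent R (symmetryGenerators R N) := by
  rw [Fintype.linearIndependent_iff]
  intro a ha
  rw [sum_smul_symmetryGenerators, Prod.mk_eq_zero, Prod.mk_eq_zero] at ha
  obtain ⟨base, slope, shift⟩ := ha
  have a_translation : a (.inr 0) = 0 := by simpa using congrArg (coeff · 0) base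
  have a_dilation : a (.inr 1) = 0 := by
    simpa [coeff_C, coeff_X_pow, two_ne_zero] using congrArg (coeff · 1) base
  have a_projective : a (.inr 2) = 0 := by
    simpa [coeff_X, coeff_C] using congrArg (coeff · 2) base
  have a_verticalScaling : a (.inr 3) = 0 := by
    simpa [a_dilation] using congrArg (coeff · 0) slope
  have a_solutionShift (k : Fin N) : a (.inl k) = 0 := by
    simpa [coeff_X_pow, Fin.val_inj] using congrArg (coeff · k) shift
  rintro (k | i)
  · exact a_solutionShift k
  · fin_cases i <;> assumption

theorem toField_solutionShift (k : ℕ) :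
    toField R (solutionShift k) = fun p => (0, p.1 ^ k) := by
  funext p
  simp [toField_apply, solutionShift]

theorem toField_comp_symmetryGenerators (N : ℕ) :
    toField R ∘ symmetryGenerators R N =
      Sum.elim (fun k : Fin N => fun p => (0, p.1 ^ (k : ℕ)))
        ![fun _ => (1, 0), fun p => (-2 * p.1, -((N : R) - 1) * p.2),
          fun p => (-p.1 ^ 2, -((N : R) - 1) * p.1 * p.2), fun p => (0, p.2)] := by
  funext i p
  rcases i with k | i
  · simp [symmetryGenerators, toField_solutionShift]
  · fin_cases i <;>
      simp [symmetryGenerators, toField_apply, translation, dilation, projective, verticalScaling]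

end Generators

end FiberAffineCoeffs

open FiberAffineCoeffs

theorem structure_of_symmetry_algebra_of_yN_eq_zero_general
    {𝕜 : Type*} [NontriviallyNormedField 𝕜] [NeZero (2 : 𝕜)] (N : ℕ)
    (X H Y T : 𝕜 × 𝕜 → 𝕜 × 𝕜) (W : ℕ → 𝕜 × 𝕜 → 𝕜 × 𝕜)
    (hX : X = fun _ => (1, 0))
    (hH : H = fun p => (-2 * p.1, -((N : 𝕜) - 1) * p.2))
    (hY : Y = fun p => (-p.1 ^ 2, -((N : 𝕜) - 1) * p.1 * p.2))
    (hW : W = fun k p => (0, p.1 ^ k))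
    (hT : T = fun p => (0, p.2))
    (b : Fin N ⊕ Fin 4 → 𝕜 × 𝕜 → 𝕜 × 𝕜)
    (hb : b = Sum.elim (fun k : Fin N => W (k : ℕ)) ![X, H, Y, T]) :
    (∀ v w : 𝕜 × 𝕜 → 𝕜 × 𝕜,
      v ∈ span 𝕜 (Set.range b) → w ∈ span 𝕜 (Set.range b) →
      lieBracket 𝕜 v w ∈ span 𝕜 (Set.range b)) ∧
    LinearIndependent 𝕜 b ∧
    (∀ j k : ℕ, lieBracket 𝕜 (W j) (W k) = 0) := by
  have b_eq : b = toField 𝕜 ∘ symmetryGenerators 𝕜 N := by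
    rw [toField_comp_symmetryGenerators, hb, hX, hH, hY, hW, hT]
  have W_eq (k : ℕ) : W k = toField 𝕜 (solutionShift k) := by rw [toField_solutionShift, hW]
  refine ⟨fun v w hv hw => ?_, ?_, fun j k => ?_⟩
  · rw [b_eq, Set.range_comp, ← map_span] at hv hw ⊢
    exact lieBracket_mem_map_toField
      (fun _ hu _ hu' => bracket_mem_span_symmetryGenerators N hu hu') hv hw
  · rw [b_eq]
    exact (linearIndependent_symmetryGenerators N).map_injOn _ toField_injective.injOn
  · rw [W_eq, W_eq, lieBracket_toField, bracket_solutionShift_solutionShift, map_zero]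

theorem structure_of_symmetry_algebra_of_yN_eq_zero
    (N : ℕ) (hN : 3 ≤ N)
    (X H Y T : ℝ × ℝ → ℝ × ℝ) (W : ℕ → ℝ × ℝ → ℝ × ℝ)
    (hX : X = fun _ => (1, 0))
    (hH : H = fun p => (-2 * p.1, -((N : ℝ) - 1) * p.2))
    (hY : Y = fun p => (-p.1 ^ 2, -((N : ℝ) - 1) * p.1 * p.2))
    (hW : W = fun k p => (0, p.1 ^ k))
    (hT : T = fun p => (0, p.2))
    (b : Fin N ⊕ Fin 4 → ℝ × ℝ → ℝ × ℝ)
    (hb : b = Sum.elim (fun k : Fin N => W (k : ℕ)) ![X, H, Y, T]) :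
    (∀ v w : ℝ × ℝ → ℝ × ℝ,
      v ∈ Submodule.span ℝ (Set.range b) → w ∈ Submodule.span ℝ (Set.range b) →
      lieBracket ℝ v w ∈ Submodule.span ℝ (Set.range b)) ∧
    LinearIndependent ℝ b ∧
    (∀ j k : Fin N, lieBracket ℝ (W (j : ℕ)) (W (k : ℕ)) = 0) := by
  obtain ⟨closed, independent, commute⟩ :=
    structure_of_symmetry_algebra_of_yN_eq_zero_general N X H Y T W hX hH hY hW hT b hb
  exact ⟨closed, independent, fun j k => commute j k⟩
end

section
/- Let N ≥ 2 be an integer and d = N−1. Let a, b : ℝ² → ℝ be twice continuously differentiable and define the vector fields on ℝ²: X(p) = (1, 0), V(p) = (0, 1), Y(p) = (a(p), b(p)), and H = [X, Y]. Assume [H, X] = 2X, [H, V] = d·V, and that at every point the first component of [Y, V] vanishes (i.e. [Y, V] is everywhere parallel to V). Then for all (x,y) ∈ ℝ²: ∂a/∂y (x,y) = 0, ∂²a/∂x² (x,y) = −2, ∂²b/∂x² (x,y) = 0, and ∂²b/∂x∂y (x,y) = −d. (This is the system of constraints derived in the first step of the proof of part (a) of Theorem 3.4, which forces a(x) = −x²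 + αx + β and b(x,y) = −d·xy + γx + H(y).) -/
open VectorField

/-! Bracketing with a constant field is, up to sign, componentwise differentiation along it. Hence
`H = (∂ₓa, ∂ₓb)`, and the conditions on `[H, X]`, `[H, V]` and `[Y, V]` are, component by component,
the asserted differential equations. -/

section LieBracketConst

variable {𝕜 : Type*} [NontriviallyNormedField 𝕜]
  {E : Type*} [NormedAddCommGroup E] [NormedSpace 𝕜 E]
  {F : Type*} [NormedAddCommGroup F] [NormedSpace 𝕜 F]

theorem lieBracket_const_left (v : E) (W : E → E) (p : E) :
    lieBracket 𝕜 (fun _ => v) W p = fderiv 𝕜 W p v := by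
  simp [lieBracket]

theorem lieBracket_const_right (W : E → E) (v p : E) :
    lieBracket 𝕜 W (fun _ => v) p = -fderiv 𝕜 W p v := by
  simp [lieBracket]

theorem lieBracket_const_prodMk {f : E × F → E} {g : E × F → F} {p : E × F}
    (hf : DifferentiableAt 𝕜 f p) (hg : DifferentiableAt 𝕜 g p) (v : E × F) :
    lieBracket 𝕜 (fun _ => v) (fun q => (f q, g q)) p = (fderiv 𝕜 f p v, fderiv 𝕜 g p v) := by
  rw [lieBracket_const_left, hf.fderiv_prodMk hg, ContinuousLinearMap.prod_apply]

theorem lieBracket_prodMk_const {f : E × F → E} {g : E × F → F} {p : E × F}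
    (hf : DifferentiableAt 𝕜 f p) (hg : DifferentiableAt 𝕜 g p) (v : E × F) :
    lieBracket 𝕜 (fun q => (f q, g q)) (fun _ => v) p = (-fderiv 𝕜 f p v, -fderiv 𝕜 g p v) := by
  rw [lieBracket_const_right, hf.fderiv_prodMk hg, ContinuousLinearMap.prod_apply, Prod.neg_mk]

end LieBracketConst

theorem differentiable_fderiv_apply_of_contDiff {𝕜 E F : Type*} [NontriviallyNormedField 𝕜]
    [NormedAddCommGroup E] [NormedSpace 𝕜 E] [NormedAddCommGroup F] [NormedSpace 𝕜 F]
    {f : E → F} (hf : ContDiff 𝕜 2 f) (v : E) :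
    Differentiable 𝕜 (fun q => fderiv 𝕜 f q v) :=
  have fderiv_contDiff : ContDiff 𝕜 1 (fderiv 𝕜 f) := hf.fderiv_right one_add_one_eq_two.le
  (fderiv_contDiff.differentiable one_ne_zero).clm_apply (differentiable_const v)

theorem constraints_on_Y_coefficients_general {𝕜 : Type*} [NontriviallyNormedField 𝕜] {c d : 𝕜}
    {a b : 𝕜 × 𝕜 → 𝕜} (ha : Differentiable 𝕜 a) (hb : Differentiable 𝕜 b)
    (ha_x : Differentiable 𝕜 (fun q => fderiv 𝕜 a q (1, 0)))
    (hb_x : Differentiable 𝕜 (fun q => fderiv 𝕜 b q (1, 0)))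
    {X V Y H : 𝕜 × 𝕜 → 𝕜 × 𝕜}
    (hX : X = fun _ => (1, 0))
    (hV : V = fun _ => (0, 1))
    (hY : Y = fun p => (a p, b p))
    (hH : H = lieBracket 𝕜 X Y)
    (hHX : lieBracket 𝕜 H X = c • X)
    (hHV : lieBracket 𝕜 H V = d • V)
    (hYV : ∀ p, (lieBracket 𝕜 Y V p).1 = 0) (p : 𝕜 × 𝕜) :
    fderiv 𝕜 a p (0, 1) = 0 ∧
      fderiv 𝕜 (fun q => fderiv 𝕜 a q (1, 0)) p (1, 0) = -c ∧
      fderiv 𝕜 (fun q => fderiv 𝕜 b q (1, 0)) p (1, 0) = 0 ∧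
      fderiv 𝕜 (fun q => fderiv 𝕜 b q (1, 0)) p (0, 1) = -d := by
  have H_eq : H = fun q => (fderiv 𝕜 a q (1, 0), fderiv 𝕜 b q (1, 0)) := by
    rw [hH, hX, hY]
    exact funext fun q => lieBracket_const_prodMk (ha q) (hb q) (1, 0)
  have bracket_HX := congrFun hHX p
  have bracket_HV := congrFun hHV p
  have bracket_YV := hYV p
  rw [H_eq, hX, lieBracket_prodMk_const (ha_x p) (hb_x p)] at bracket_HX
  rw [H_eq, hV, lieBracket_prodMk_const (ha_x p) (hb_x p)] at bracket_HV
  rw [hY, hV, lieBracket_prodMk_const (ha p) (hb p)] at bracket_YV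
  obtain ⟨a_xx, b_xx⟩ :
      -fderiv 𝕜 (fun q => fderiv 𝕜 a q (1, 0)) p (1, 0) = c ∧
        fderiv 𝕜 (fun q => fderiv 𝕜 b q (1, 0)) p (1, 0) = 0 := by
    simpa using bracket_HX
  have b_xy : -fderiv 𝕜 (fun q => fderiv 𝕜 b q (1, 0)) p (0, 1) = d := by
    simpa using congrArg Prod.snd bracket_HV
  exact ⟨neg_eq_zero.mp bracket_YV, neg_eq_iff_eq_neg.mp a_xx, b_xx, neg_eq_iff_eq_neg.mp b_xy⟩

theorem constraints_on_Y_coefficients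
    (N : ℕ) (hN : 2 ≤ N) (d : ℝ) (hd : d = (N : ℝ) - 1)
    (a b : ℝ × ℝ → ℝ) (ha : ContDiff ℝ 2 a) (hb : ContDiff ℝ 2 b)
    (X V Y H : ℝ × ℝ → ℝ × ℝ)
    (hX : X = fun _ => (1, 0))
    (hV : V = fun _ => (0, 1))
    (hY : Y = fun p => (a p, b p))
    (hH : H = lieBracket ℝ X Y)
    (h1 : lieBracket ℝ H X = (2 : ℝ) • X)
    (h2 : lieBracket ℝ H V = d • V)
    (h3 : ∀ p : ℝ × ℝ, (lieBracket ℝ Y V p).1 = 0) :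
    ∀ p : ℝ × ℝ,
      fderiv ℝ a p (0, 1) = 0 ∧
      fderiv ℝ (fun q => fderiv ℝ a q (1, 0)) p (1, 0) = -2 ∧
      fderiv ℝ (fun q => fderiv ℝ b q (1, 0)) p (1, 0) = 0 ∧
      fderiv ℝ (fun q => fderiv ℝ b q (1, 0)) p (0, 1) = -d :=
  constraints_on_Y_coefficients_general
    (ha.differentiable two_ne_zero) (hb.differentiable two_ne_zero)
    (differentiable_fderiv_apply_of_contDiff ha _) (differentiable_fderiv_apply_of_contDiff hb _)
    hX hV hY hH h1 h2 h3
end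

section
/- Define the smooth vector fields on ℝ²: e₁(x,y) = (0, 1), e₂(x,y) = (x, 0), e₃(x,y) = (e^{−y}, 0), e₄(x,y) = (e^{y/2}·sin(√3·y/2), 0), e₅(x,y) = (e^{y/2}·cos(√3·y/2), 0). Then their Lie brackets satisfy: [e₁, e₃] = −e₃, [e₁, e₄] = (√3/2)·e₅ + (1/2)·e₄, [e₁, e₅] = (1/2)·e₅ − (√3/2)·e₄, [e₂, e₃] = −e₃, [e₂, e₄] = −e₄, [e₂, e₅] = −e₅, and all remaining brackets among the basis vanish: [e₁, e₂] = 0, [e₃, e₄] = [e₃, e₅] = [e₄, e₅] = 0. In particular the span of e₁, …, e₅ is a five-dimensional solvable Lie algebra of vector fields with abelian derived algebra spanned by e₃, e₄, e₅. (These are the commutation relations (5.7) of the symmetry algebra of the ODE y''' = 3y''²/y' + x·y'⁴ verified in Section 5, Class 2a.) -/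
open VectorField

/-!
The fields `e₃, e₄, e₅` are of the form `g(y) ∂ₓ`. Such fields do not vary along their own
direction, so they commute; bracketing with `e₁ = ∂_y` differentiates `g`, and bracketing with the
Euler field `e₂ = x ∂ₓ` multiplies by `-1`. For independence, `∂_y` is the only field with a
vertical component and `x ∂ₓ` the only one depending on `x`; a linear relation between the remaining
coefficients `e^{cy}`, `e^{ay} sin(by)`, `e^{ay} cos(by)` is tested at `y = 0`, `π/b` and `π/(2b)`.
-/

section Fields

variable {E F : Type*} [AddCommGroup E] [AddCommGroup F]

/-- The constant vector field `∂_w` on `E × F` in the direction `w` of the second factor,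
generalizing `e₁ = ∂_y`. -/
def verticalField (w : F) : E × F → E × F := fun _ => (0, w)

/-- The Euler vector field `x ∂ₓ` of the first factor of `E × F`, generalizing `e₂`. -/
def horizontalEulerField : E × F → E × F := fun p => (p.1, 0)

variable (𝕜 : Type*) [Ring 𝕜] [Module 𝕜 E] [Module 𝕜 F]

/-- The vector field `g(y) ∂ₓ` on `E × F`, horizontal and with coefficient depending on the second
coordinate only, as a linear function of `g`. -/
def horizontalField : (F → E) →ₗ[𝕜] (E × F → E × F) where
  toFun g p := (g p.2, 0)
  map_add' g₁ g₂ := by ext p <;> simp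
  map_smul' c g := by ext p <;> simp

theorem horizontalField_apply (g : F → E) (p : E × F) : horizontalField 𝕜 g p = (g p.2, 0) := rfl

theorem horizontalField_injective :
    Function.Injective (horizontalField 𝕜 : (F → E) →ₗ[𝕜] (E × F → E × F)) := fun _ _ h =>
  funext fun y => congrArg Prod.fst (congrFun h (0, y))

theorem horizontalEulerField_notMem_range_horizontalField [Nontrivial E] :
    (horizontalEulerField : E × F → E × F) ∉ LinearMap.range (horizontalField 𝕜) := by
  rintro ⟨g, hg⟩
  obtain ⟨x, hx⟩ := exists_ne (0 : E)
  have g_zero_eq (x : E) : g 0 = x := congrArg Prod.fst (congrFun hg (x, 0))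
  exact hx ((g_zero_eq x).symm.trans (g_zero_eq 0))

theorem verticalField_notMem_span {w : F} (hw : w ≠ 0) {s : Set (E × F → E × F)}
    (hs : ∀ V ∈ s, ∀ p, (V p).2 = 0) : verticalField w ∉ Submodule.span 𝕜 s := by
  intro hmem
  have snd_eq_zero : ∀ V ∈ Submodule.span 𝕜 s, (V 0).2 = 0 := fun V hV => by
    induction hV using Submodule.span_induction with
    | mem V hV => exact hs V hV 0
    | zero => rfl
    | add V W _ _ hV hW => simp [hV, hW]
    | smul c V _ hV => simp [hV]
  exact hw (snd_eq_zero _ hmem)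

theorem linearIndependent_cons_cons_horizontalField {𝕜 : Type*} [DivisionRing 𝕜] [Module 𝕜 E]
    [Module 𝕜 F] [Nontrivial E] {n : ℕ} {g : Fin n → F → E} (hg : LinearIndependent 𝕜 g) {w : F}
    (hw : w ≠ 0) :
    LinearIndependent 𝕜 (Matrix.vecCons (verticalField w)
      (Matrix.vecCons horizontalEulerField (horizontalField 𝕜 ∘ g))) := by
  refine linearIndependent_finCons.2 ⟨linearIndependent_finCons.2 ⟨?_, ?_⟩, ?_⟩
  · exact hg.map' _ (LinearMap.ker_eq_bot.2 (horizontalField_injective 𝕜))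
  · refine fun hmem => horizontalEulerField_notMem_range_horizontalField 𝕜
      (Submodule.span_le.2 ?_ hmem)
    rintro _ ⟨i, rfl⟩
    exact LinearMap.mem_range_self _ _
  · refine verticalField_notMem_span 𝕜 hw ?_
    rintro _ ⟨i, rfl⟩ p
    cases i using Fin.cases <;> rfl

end Fields

section LieBracket

variable {𝕜 E F : Type*} [NontriviallyNormedField 𝕜] [NormedAddCommGroup E] [NormedSpace 𝕜 E]
  [NormedAddCommGroup F] [NormedSpace 𝕜 F]

theorem hasFDerivAt_horizontalEulerField (p : E × F) :
    HasFDerivAt horizontalEulerField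
      ((ContinuousLinearMap.inl 𝕜 E F).comp (ContinuousLinearMap.fst 𝕜 E F)) p :=
  ((ContinuousLinearMap.inl 𝕜 E F).comp (ContinuousLinearMap.fst 𝕜 E F)).hasFDerivAt

theorem fderiv_horizontalField_apply {g : F → E} {p : E × F} (hg : DifferentiableAt 𝕜 g p.2)
    (v : E × F) : fderiv 𝕜 (horizontalField 𝕜 g) p v = (fderiv 𝕜 g p.2 v.2, 0) := by
  have h : HasFDerivAt (horizontalField 𝕜 g) _ p :=
    (hg.hasFDerivAt.comp p hasFDerivAt_snd).prodMk (hasFDerivAt_const 0 p)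
  rw [h.fderiv]
  rfl

theorem fderiv_verticalField (w : F) (p : E × F) :
    fderiv 𝕜 (verticalField w : E × F → E × F) p = 0 :=
  fderiv_const_apply _

theorem lieBracket_verticalField_horizontalEulerField (w : F) :
    lieBracket 𝕜 (verticalField w : E × F → E × F) horizontalEulerField = 0 := by
  ext1 p
  rw [lieBracket, (hasFDerivAt_horizontalEulerField p).fderiv, fderiv_verticalField]
  simp [verticalField]

theorem lieBracket_verticalField_horizontalField {g : F → E} (hg : Differentiable 𝕜 g) (w : F) :
    lieBracket 𝕜 (verticalField w) (horizontalField 𝕜 g) =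
      horizontalField 𝕜 fun y => fderiv 𝕜 g y w := by
  ext1 p
  rw [lieBracket, fderiv_horizontalField_apply (hg p.2), fderiv_verticalField]
  simp [verticalField, horizontalField_apply]

theorem lieBracket_verticalField_one_horizontalField {g g' : 𝕜 → E}
    (hg : ∀ y, HasDerivAt g (g' y) y) :
    lieBracket 𝕜 (verticalField 1) (horizontalField 𝕜 g) = horizontalField 𝕜 g' := by
  rw [lieBracket_verticalField_horizontalField fun y => (hg y).differentiableAt]
  simp only [fderiv_apply_one_eq_deriv, (hg _).deriv]

theorem lieBracket_horizontalEulerField_horizontalField {g : F → E} (hg : Differentiable 𝕜 g) :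
    lieBracket 𝕜 horizontalEulerField (horizontalField 𝕜 g) = -horizontalField 𝕜 g := by
  ext1 p
  rw [lieBracket, fderiv_horizontalField_apply (hg p.2),
    (hasFDerivAt_horizontalEulerField p).fderiv]
  simp [horizontalEulerField, horizontalField_apply]

theorem lieBracket_horizontalField_horizontalField {f g : F → E} (hf : Differentiable 𝕜 f)
    (hg : Differentiable 𝕜 g) :
    lieBracket 𝕜 (horizontalField 𝕜 f) (horizontalField 𝕜 g) = 0 := by
  ext1 p
  rw [lieBracket, fderiv_horizontalField_apply (hf p.2), fderiv_horizontalField_apply (hg p.2)]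
  simp [horizontalField_apply]

end LieBracket

section ExpTrig

/-- The function `y ↦ e^{cy}`; the coefficient of `e₃` for `c = -1`. -/
noncomputable def expMul (c : ℝ) : ℝ → ℝ := fun y => Real.exp (c * y)

/-- The function `y ↦ e^{ay} sin(by)`, the imaginary part of `e^{(a + bi)y}`; the coefficient of
`e₄` for `a = 1/2` and `b = √3/2`. -/
noncomputable def expMulSin (a b : ℝ) : ℝ → ℝ := fun y => Real.exp (a * y) * Real.sin (b * y)

/-- The function `y ↦ e^{ay} cos(by)`, the real part of `e^{(a + bi)y}`; the coefficient of `e₅` for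
`a = 1/2` and `b = √3/2`. -/
noncomputable def expMulCos (a b : ℝ) : ℝ → ℝ := fun y => Real.exp (a * y) * Real.cos (b * y)

theorem hasDerivAt_expMul (c y : ℝ) : HasDerivAt (expMul c) ((c • expMul c) y) y := by
  refine (hasDerivAt_const_mul c).exp.congr_deriv ?_
  simp only [expMul, Pi.smul_apply, smul_eq_mul]
  ring

theorem differentiable_expMul (c : ℝ) : Differentiable ℝ (expMul c) := fun y =>
  (hasDerivAt_expMul c y).differentiableAt

theorem hasDerivAt_expMulSin (a b y : ℝ) :
    HasDerivAt (expMulSin a b) ((b • expMulCos a b + a • expMulSin a b) y) y := by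
  refine ((hasDerivAt_const_mul a).exp.mul (hasDerivAt_const_mul b).sin).congr_deriv ?_
  simp only [expMulSin, expMulCos, Pi.add_apply, Pi.smul_apply, smul_eq_mul]
  ring

theorem differentiable_expMulSin (a b : ℝ) : Differentiable ℝ (expMulSin a b) := fun y =>
  (hasDerivAt_expMulSin a b y).differentiableAt

theorem hasDerivAt_expMulCos (a b y : ℝ) :
    HasDerivAt (expMulCos a b) ((a • expMulCos a b - b • expMulSin a b) y) y := by
  refine ((hasDerivAt_const_mul a).exp.mul (hasDerivAt_const_mul b).cos).congr_deriv ?_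
  simp only [expMulSin, expMulCos, Pi.sub_apply, Pi.smul_apply, smul_eq_mul]
  ring

theorem differentiable_expMulCos (a b : ℝ) : Differentiable ℝ (expMulCos a b) := fun y =>
  (hasDerivAt_expMulCos a b y).differentiableAt

theorem linearIndependent_expMul_expMulSin_expMulCos (a c : ℝ) {b : ℝ} (hb : b ≠ 0) :
    LinearIndependent ℝ ![expMul c, expMulSin a b, expMulCos a b] := by
  suffices h : ∀ r s t : ℝ, r • expMul c + s • expMulSin a b + t • expMulCos a b = 0 →
      r = 0 ∧ s = 0 ∧ t = 0 by
    simpa [Fintype.linearIndependent_iff, Fin.forall_fin_succ_pi, Fin.forall_fin_succ,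
      Fin.sum_univ_succ, add_assoc] using h
  intro r s t hrel
  have eval_rel (y : ℝ) : r * Real.exp (c * y) + s * (Real.exp (a * y) * Real.sin (b * y)) +
      t * (Real.exp (a * y) * Real.cos (b * y)) = 0 := congrFun hrel y
  have at_zero : r + t = 0 := by simpa using eval_rel 0
  have at_pi : r * Real.exp (c * (Real.pi / b)) - t * Real.exp (a * (Real.pi / b)) = 0 := by
    simpa [mul_div_cancel₀ _ hb, ← sub_eq_add_neg] using eval_rel (Real.pi / b)
  have at_pi_div_two : r * Real.exp (c * (Real.pi / 2 / b)) +
      s * Real.exp (a * (Real.pi / 2 / b)) = 0 := by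
    simpa [mul_div_cancel₀ _ hb] using eval_rel (Real.pi / 2 / b)
  have r_eq_zero : r = 0 := by
    have : r * (Real.exp (c * (Real.pi / b)) + Real.exp (a * (Real.pi / b))) = 0 := by
      linear_combination at_pi + Real.exp (a * (Real.pi / b)) * at_zero
    exact (mul_eq_zero.1 this).resolve_right (by positivity)
  refine ⟨r_eq_zero, ?_, by simpa [r_eq_zero] using at_zero⟩
  simpa [r_eq_zero] using at_pi_div_two

theorem linearIndependent_verticalField_horizontalEulerField_expMul (a c : ℝ) {b : ℝ}
    (hb : b ≠ 0) :
    LinearIndependent ℝ ![verticalField 1, horizontalEulerField, horizontalField ℝ (expMul c),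
      horizontalField ℝ (expMulSin a b), horizontalField ℝ (expMulCos a b)] := by
  simpa only [Matrix.vecCons, Fin.comp_cons, Matrix.empty_eq] using
    linearIndependent_cons_cons_horizontalField
      (linearIndependent_expMul_expMulSin_expMulCos a c hb) (one_ne_zero : (1 : ℝ) ≠ 0)

end ExpTrig

theorem commutation_relations_class2a
    (e₁ e₂ e₃ e₄ e₅ : ℝ × ℝ → ℝ × ℝ)
    (h₁ : e₁ = fun _ => (0, 1))
    (h₂ : e₂ = fun p => (p.1, 0))
    (h₃ : e₃ = fun p => (Real.exp (-p.2), 0))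
    (h₄ : e₄ = fun p => (Real.exp (p.2 / 2) * Real.sin (Real.sqrt 3 * p.2 / 2), 0))
    (h₅ : e₅ = fun p => (Real.exp (p.2 / 2) * Real.cos (Real.sqrt 3 * p.2 / 2), 0)) :
    lieBracket ℝ e₁ e₃ = -e₃ ∧
    lieBracket ℝ e₁ e₄ = (Real.sqrt 3 / 2) • e₅ + (1 / 2 : ℝ) • e₄ ∧
    lieBracket ℝ e₁ e₅ = (1 / 2 : ℝ) • e₅ - (Real.sqrt 3 / 2) • e₄ ∧
    lieBracket ℝ e₂ e₃ = -e₃ ∧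
    lieBracket ℝ e₂ e₄ = -e₄ ∧
    lieBracket ℝ e₂ e₅ = -e₅ ∧
    lieBracket ℝ e₁ e₂ = 0 ∧
    lieBracket ℝ e₃ e₄ = 0 ∧
    lieBracket ℝ e₃ e₅ = 0 ∧
    lieBracket ℝ e₄ e₅ = 0 ∧
    LinearIndependent ℝ ![e₁, e₂, e₃, e₄, e₅] := by
  obtain rfl : e₁ = verticalField 1 := h₁
  obtain rfl : e₂ = horizontalEulerField := h₂
  obtain rfl : e₃ = horizontalField ℝ (expMul (-1)) := h₃.trans <| funext fun p => by
    simp only [horizontalField_apply, expMul, neg_one_mul]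
  obtain rfl : e₄ = horizontalField ℝ (expMulSin (1 / 2) (√3 / 2)) := h₄.trans <| funext fun p => by
    simp only [horizontalField_apply, expMulSin, div_mul_eq_mul_div, one_mul]
  obtain rfl : e₅ = horizontalField ℝ (expMulCos (1 / 2) (√3 / 2)) := h₅.trans <| funext fun p => by
    simp only [horizontalField_apply, expMulCos, div_mul_eq_mul_div, one_mul]
  have d₃ := differentiable_expMul (-1)
  have d₄ := differentiable_expMulSin (1 / 2) (√3 / 2)
  have d₅ := differentiable_expMulCos (1 / 2) (√3 / 2)
  refine ⟨?_, ?_, ?_, lieBracket_horizontalEulerField_horizontalField d₃,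
    lieBracket_horizontalEulerField_horizontalField d₄,
    lieBracket_horizontalEulerField_horizontalField d₅,
    lieBracket_verticalField_horizontalEulerField 1,
    lieBracket_horizontalField_horizontalField d₃ d₄,
    lieBracket_horizontalField_horizontalField d₃ d₅,
    lieBracket_horizontalField_horizontalField d₄ d₅,
    linearIndependent_verticalField_horizontalEulerField_expMul _ _ (by positivity)⟩
  · rw [lieBracket_verticalField_one_horizontalField (hasDerivAt_expMul _), map_smul, neg_one_smul]
  · simp only [lieBracket_verticalField_one_horizontalField (hasDerivAt_expMulSin _ _), map_add,
      map_smul]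
  · simp only [lieBracket_verticalField_one_horizontalField (hasDerivAt_expMulCos _ _), map_sub,
      map_smul]
end

section
/- Let I ⊆ ℝ be an open interval with x + 2 ≠ 0 for all x ∈ I, and let y : ℝ → ℝ be three times differentiable on I satisfying the nonlinear third-order ODE (x+2)·y'''(x) = ((x+3) − 3(x+2)·y'(x))·y''(x) − ((x+2)·y'(x) − (x+3))·y'(x)² for all x ∈ I. Then the function u(x) = e^{y(x)} is three times differentiable on I and satisfies the linear ODE (x+2)·u'''(x) = (x+3)·u''(x) for all x ∈ I. (This is the linearization of the Class 1 example (5.1) of Section 5 by the change of dependent variable ỹ = e^{y}, reducing it to the canonical form ỹ''' − ((x+3)/(x+2))·ỹ'' = 0.) -/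
/-- `y` is three times differentiable on `I`. -/
def ThreeDiffOn (y : ℝ → ℝ) (I : Set ℝ) : Prop :=
  ∀ x ∈ I, DifferentiableAt ℝ y x ∧ DifferentiableAt ℝ (deriv y) x ∧
    DifferentiableAt ℝ (deriv^[2] y) x

/-!
If `u' = u v`, then `u'' = u (v² + v')` and `u''' = u (v³ + 3 v v' + v'')`. For `u = exp y` and
`v = y'` this makes `p u''' - q u''` the product of the nowhere vanishing factor `exp y` and
`p (y''' + 3 y' y'' + y'³) - q (y'' + y'²)`, whose vanishing is the nonlinear equation.
-/

open Filter Topology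

section LogDeriv

variable {𝕜 : Type*} [NontriviallyNormedField 𝕜] {u v w : 𝕜 → 𝕜} {v' w' x : 𝕜}

theorem hasDerivAt_deriv_of_eventually_hasDerivAt_mul
    (hu : ∀ᶠ z in 𝓝 x, HasDerivAt u (u z * v z) z) (hv : HasDerivAt v v' x) :
    HasDerivAt (deriv u) (u x * (v x ^ 2 + v')) x := by
  have deriv_eq : deriv u =ᶠ[𝓝 x] u * v := hu.mono fun _ hz => hz.deriv
  refine ((hu.self_of_nhds.mul hv).congr_of_eventuallyEq deriv_eq).congr_deriv ?_
  ring

theorem hasDerivAt_iterate_deriv_two_of_eventually_hasDerivAt_mul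
    (hu : ∀ᶠ z in 𝓝 x, HasDerivAt u (u z * v z) z)
    (hv : ∀ᶠ z in 𝓝 x, HasDerivAt v (w z) z) (hw : HasDerivAt w w' x) :
    HasDerivAt (deriv^[2] u) (u x * (v x ^ 3 + 3 * v x * w x + w')) x := by
  have deriv_eq : deriv^[2] u =ᶠ[𝓝 x] u * (v ^ 2 + w) := by
    filter_upwards [hu.eventually_nhds, hv] with z huz hvz
    exact (hasDerivAt_deriv_of_eventually_hasDerivAt_mul huz hvz).deriv
  have product_rule := hu.self_of_nhds.mul ((hv.self_of_nhds.pow 2).add hw)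
  refine (product_rule.congr_of_eventuallyEq deriv_eq).congr_deriv ?_
  simp only [Pi.add_apply, Pi.pow_apply]
  ring

end LogDeriv

namespace ThreeDiffOn

variable {y : ℝ → ℝ} {s : Set ℝ} {x : ℝ}

theorem eventually_hasDerivAt_exp (hy : ThreeDiffOn y s) (hs : IsOpen s) (hx : x ∈ s) :
    ∀ᶠ z in 𝓝 x, HasDerivAt (fun t => Real.exp (y t)) (Real.exp (y z) * deriv y z) z :=
  (hs.eventually_mem hx).mono fun z hz => (hy z hz).1.hasDerivAt.exp

theorem hasDerivAt_deriv_exp (hy : ThreeDiffOn y s) (hs : IsOpen s) (hx : x ∈ s) :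
    HasDerivAt (deriv fun t => Real.exp (y t))
      (Real.exp (y x) * (deriv y x ^ 2 + deriv^[2] y x)) x :=
  hasDerivAt_deriv_of_eventually_hasDerivAt_mul (hy.eventually_hasDerivAt_exp hs hx)
    (hy x hx).2.1.hasDerivAt

theorem hasDerivAt_iterate_deriv_two_exp (hy : ThreeDiffOn y s) (hs : IsOpen s) (hx : x ∈ s) :
    HasDerivAt (deriv^[2] fun t => Real.exp (y t))
      (Real.exp (y x) * (deriv y x ^ 3 + 3 * deriv y x * deriv^[2] y x + deriv^[3] y x)) x :=
  hasDerivAt_iterate_deriv_two_of_eventually_hasDerivAt_mul (hy.eventually_hasDerivAt_exp hs hx)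
    ((hs.eventually_mem hx).mono fun z hz => (hy z hz).2.1.hasDerivAt)
    (hy x hx).2.2.hasDerivAt

theorem exp (hy : ThreeDiffOn y s) (hs : IsOpen s) :
    ThreeDiffOn (fun t => Real.exp (y t)) s := fun x hx =>
  ⟨(hy x hx).1.exp, (hy.hasDerivAt_deriv_exp hs hx).differentiableAt,
    (hy.hasDerivAt_iterate_deriv_two_exp hs hx).differentiableAt⟩

theorem mul_iterate_deriv_three_exp_eq_iff (hy : ThreeDiffOn y s) (hs : IsOpen s) (hx : x ∈ s)
    (p q : ℝ) :
    p * deriv^[3] (fun t => Real.exp (y t)) x = q * deriv^[2] (fun t => Real.exp (y t)) x ↔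
      p * deriv^[3] y x =
        (q - 3 * p * deriv y x) * deriv^[2] y x - (p * deriv y x - q) * deriv y x ^ 2 := by
  have second_deriv : deriv^[2] (fun t => Real.exp (y t)) x = _ :=
    (hy.hasDerivAt_deriv_exp hs hx).deriv
  have third_deriv : deriv^[3] (fun t => Real.exp (y t)) x = _ :=
    (hy.hasDerivAt_iterate_deriv_two_exp hs hx).deriv
  rw [second_deriv, third_deriv, mul_left_comm p, mul_left_comm q,
    mul_right_inj' (Real.exp_ne_zero _)]
  constructor <;> intro h <;> linear_combination h

end ThreeDiffOn

theorem linearization_class1_general {s : Set ℝ} (hs : IsOpen s) (p q : ℝ → ℝ) {y : ℝ → ℝ}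
    (hy : ThreeDiffOn y s) :
    ThreeDiffOn (fun x => Real.exp (y x)) s ∧
    ∀ x ∈ s, p x * deriv^[3] (fun x => Real.exp (y x)) x =
        q x * deriv^[2] (fun x => Real.exp (y x)) x ↔
      p x * deriv^[3] y x =
        (q x - 3 * p x * deriv y x) * deriv^[2] y x -
          (p x * deriv y x - q x) * deriv y x ^ 2 :=
  ⟨hy.exp hs, fun x hx => hy.mul_iterate_deriv_three_exp_eq_iff hs hx (p x) (q x)⟩

theorem linearization_class1
    (I : Set ℝ) (hI : IsOpen I ∧ I.OrdConnected)
    (hI2 : ∀ x ∈ I, x + 2 ≠ 0)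
    (y : ℝ → ℝ) (hy : ThreeDiffOn y I)
    (hODE : ∀ x ∈ I, (x + 2) * deriv^[3] y x =
      ((x + 3) - 3 * (x + 2) * deriv y x) * deriv^[2] y x -
        ((x + 2) * deriv y x - (x + 3)) * (deriv y x) ^ 2) :
    ThreeDiffOn (fun x => Real.exp (y x)) I ∧
    ∀ x ∈ I, (x + 2) * deriv^[3] (fun x => Real.exp (y x)) x =
      (x + 3) * deriv^[2] (fun x => Real.exp (y x)) x :=
  (linearization_class1_general hI.1 (· + 2) (· + 3) hy).imp_right
    fun linear_iff x hx => (linear_iff x hx).2 (hODE x hx)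
end

section
/- Let I ⊆ ℝ be an open interval with x + 2 ≠ 0 for all x ∈ I, and let y : ℝ → ℝ be three times differentiable on I satisfying (x+2)·y'''(x) = ((x+3) − 3(x+2)·y'(x))·y''(x) − ((x+2)·y'(x) − (x+3))·y'(x)² for all x ∈ I. Let λ > 0 and c ∈ ℝ be such that λ·e^{y(x)} + c > 0 for all x ∈ I. Then the function x ↦ ln(λ·e^{y(x)} + c) is three times differentiable on I and satisfies the same ODE on I. (This verifies that the flows of the symmetry generators ∂_y and e^{−y}∂_y of equation (5.1) map solutions to solutions.) -/
/-!
The substitution `w = exp y` linearizes the equation: since `w'' = (y'' + y' ^ 2) w` and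
`w''' = (y''' + 3 y' y'' + y' ^ 3) w`, a function `y` is a solution if and only if
`(x + 2) w''' = (x + 3) w''`. This linear equation involves no derivative of order less than two,
so it is preserved by `w ↦ λ w + c`, which is the flow of the theorem in the variable `w`.
Only the shape of the equation matters here, not the coefficients `x + 2` and `x + 3`.
-/

open Set

namespace ThreeDiffOn

variable {f g : ℝ → ℝ} {I J : Set ℝ} {x : ℝ}

theorem of_analyticOnNhd (hf : AnalyticOnNhd ℝ f I) : ThreeDiffOn f I := fun x hx =>
  ⟨(hf x hx).differentiableAt, (hf.deriv x hx).differentiableAt,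
    (hf.iterated_deriv 2 x hx).differentiableAt⟩

theorem const_mul_add_const (hf : ThreeDiffOn f I) (a b : ℝ) :
    ThreeDiffOn (fun x => a * f x + b) I := by
  intro x hx
  obtain ⟨hf₀, hf₁, hf₂⟩ := hf x hx
  simp only [Function.iterate_succ_apply, Function.iterate_zero_apply, deriv_add_const',
    deriv_const_mul_field'] at hf₂ ⊢
  exact ⟨(hf₀.const_mul a).add_const b, hf₁.const_mul a, hf₂.const_mul a⟩

theorem hasDerivAt_deriv_comp (hg : ThreeDiffOn g J) (hf : ThreeDiffOn f I)
    (hfIJ : MapsTo f I J) (hI : IsOpen I) (hx : x ∈ I) :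
    HasDerivAt (deriv (g ∘ f))
      (deriv^[2] g (f x) * deriv f x ^ 2 + deriv g (f x) * deriv^[2] f x) x := by
  have hderiv : EqOn (deriv (g ∘ f)) (deriv g ∘ f * deriv f) I := fun t ht =>
    deriv_comp t (hg _ (hfIJ ht)).1 (hf t ht).1
  obtain ⟨hf₀, hf₁, -⟩ := hf x hx
  obtain ⟨-, hg₁, -⟩ := hg (f x) (hfIJ hx)
  have hprod := (hg₁.hasDerivAt.comp x hf₀.hasDerivAt).mul hf₁.hasDerivAt
  refine (hprod.congr_of_eventuallyEq
    (hderiv.eventuallyEq_of_mem (hI.mem_nhds hx))).congr_deriv ?_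
  simp only [Function.iterate_succ_apply, Function.iterate_zero_apply, Function.comp_apply]
  ring

theorem hasDerivAt_iterate_two_deriv_comp (hg : ThreeDiffOn g J) (hf : ThreeDiffOn f I)
    (hfIJ : MapsTo f I J) (hI : IsOpen I) (hx : x ∈ I) :
    HasDerivAt (deriv^[2] (g ∘ f))
      (deriv^[3] g (f x) * deriv f x ^ 3 + 3 * deriv^[2] g (f x) * deriv f x * deriv^[2] f x +
        deriv g (f x) * deriv^[3] f x) x := by
  have hderiv : EqOn (deriv^[2] (g ∘ f))
      (deriv^[2] g ∘ f * deriv f ^ 2 + deriv g ∘ f * deriv^[2] f) I := fun _ ht =>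
    (hg.hasDerivAt_deriv_comp hf hfIJ hI ht).deriv
  obtain ⟨hf₀, hf₁, hf₂⟩ := hf x hx
  obtain ⟨-, hg₁, hg₂⟩ := hg (f x) (hfIJ hx)
  have hsum := ((hg₂.hasDerivAt.comp x hf₀.hasDerivAt).mul (hf₁.hasDerivAt.pow 2)).add
    ((hg₁.hasDerivAt.comp x hf₀.hasDerivAt).mul hf₂.hasDerivAt)
  refine (hsum.congr_of_eventuallyEq
    (hderiv.eventuallyEq_of_mem (hI.mem_nhds hx))).congr_deriv ?_
  simp only [Function.iterate_succ_apply, Function.iterate_zero_apply, Function.comp_apply,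
    Pi.pow_apply]
  ring

theorem comp (hg : ThreeDiffOn g J) (hf : ThreeDiffOn f I) (hfIJ : MapsTo f I J)
    (hI : IsOpen I) : ThreeDiffOn (g ∘ f) I := fun x hx =>
  ⟨(hg _ (hfIJ hx)).1.comp x (hf x hx).1,
    (hg.hasDerivAt_deriv_comp hf hfIJ hI hx).differentiableAt,
    (hg.hasDerivAt_iterate_two_deriv_comp hf hfIJ hI hx).differentiableAt⟩

theorem exp_univ : ThreeDiffOn Real.exp univ :=
  of_analyticOnNhd fun _ _ => analyticAt_rexp

theorem log_Ioi : ThreeDiffOn Real.log (Ioi 0) :=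
  of_analyticOnNhd fun _ ht => analyticAt_log ht

theorem iterate_two_deriv_exp_comp (hf : ThreeDiffOn f I) (hI : IsOpen I) (hx : x ∈ I) :
    deriv^[2] (Real.exp ∘ f) x = Real.exp (f x) * (deriv^[2] f x + deriv f x ^ 2) := by
  have h : deriv^[2] (Real.exp ∘ f) x = _ :=
    (exp_univ.hasDerivAt_deriv_comp hf (mapsTo_univ f I) hI hx).deriv
  rw [h, Real.iter_deriv_exp, Real.deriv_exp]
  ring

theorem iterate_three_deriv_exp_comp (hf : ThreeDiffOn f I) (hI : IsOpen I) (hx : x ∈ I) :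
    deriv^[3] (Real.exp ∘ f) x =
      Real.exp (f x) * (deriv^[3] f x + 3 * deriv f x * deriv^[2] f x + deriv f x ^ 3) := by
  have h : deriv^[3] (Real.exp ∘ f) x = _ :=
    (exp_univ.hasDerivAt_iterate_two_deriv_comp hf (mapsTo_univ f I) hI hx).deriv
  rw [h, Real.iter_deriv_exp, Real.iter_deriv_exp, Real.deriv_exp]
  ring

end ThreeDiffOn

/-- The function `y` satisfies `p y''' = (q - 3 p y') y'' - (p y' - q) y' ^ 2` on `I`. Equation
(5.1) is the case `p x = x + 2`, `q x = x + 3`. Differentiability of `y` is not included. -/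
def SolvesODEOn (p q y : ℝ → ℝ) (I : Set ℝ) : Prop :=
  ∀ x ∈ I, p x * deriv^[3] y x =
    (q x - 3 * p x * deriv y x) * deriv^[2] y x - (p x * deriv y x - q x) * deriv y x ^ 2

/-- The function `w` satisfies `p w''' = q w''` on `I`, which is the equation of `SolvesODEOn`
written for `w = exp y`. Differentiability of `w` is not included. -/
def SolvesLinearODEOn (p q w : ℝ → ℝ) (I : Set ℝ) : Prop :=
  ∀ x ∈ I, p x * deriv^[3] w x = q x * deriv^[2] w x

/-- For `0 < lam`, the image of `y` under the flow `y ↦ y + log lam` of `∂_y` followed by the flow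
`y ↦ log (exp y + c)` of `e^{-y} ∂_y`. Where `lam * exp y + c` is not positive, the value is the
junk value of `Real.log`. -/
noncomputable def symmetryFlow (lam c : ℝ) (y : ℝ → ℝ) : ℝ → ℝ :=
  fun x => Real.log (lam * Real.exp (y x) + c)

section

variable {p q y w v : ℝ → ℝ} {I : Set ℝ} {lam c : ℝ}

theorem solvesODEOn_iff_solvesLinearODEOn_exp_comp (hI : IsOpen I) (hy : ThreeDiffOn y I) :
    SolvesODEOn p q y I ↔ SolvesLinearODEOn p q (Real.exp ∘ y) I := by
  refine forall₂_congr fun x hx => ?_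
  rw [hy.iterate_two_deriv_exp_comp hI hx, hy.iterate_three_deriv_exp_comp hI hx,
    mul_left_comm (p x), mul_left_comm (q x), mul_right_inj' (Real.exp_ne_zero _)]
  constructor <;> intro h <;> linear_combination h

theorem SolvesLinearODEOn.congr (hw : SolvesLinearODEOn p q w I) (hI : IsOpen I)
    (hvw : EqOn v w I) : SolvesLinearODEOn p q v I := by
  have h₂ : EqOn (deriv^[2] v) (deriv^[2] w) I := (hvw.deriv hI).deriv hI
  have h₃ : EqOn (deriv^[3] v) (deriv^[3] w) I := h₂.deriv hI
  intro x hx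
  rw [h₂ hx, h₃ hx, hw x hx]

theorem SolvesLinearODEOn.const_mul_add_const (hw : SolvesLinearODEOn p q w I) (a b : ℝ) :
    SolvesLinearODEOn p q (fun x => a * w x + b) I := by
  intro x hx
  have h := hw x hx
  simp only [Function.iterate_succ_apply, Function.iterate_zero_apply, deriv_add_const',
    deriv_const_mul_field'] at h ⊢
  linear_combination a * h

theorem ThreeDiffOn.symmetryFlow (hy : ThreeDiffOn y I) (hI : IsOpen I)
    (hpos : ∀ x ∈ I, 0 < lam * Real.exp (y x) + c) : ThreeDiffOn (symmetryFlow lam c y) I :=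
  log_Ioi.comp ((exp_univ.comp hy (mapsTo_univ y I) hI).const_mul_add_const lam c) hpos hI

theorem exp_comp_symmetryFlow_eqOn (hpos : ∀ x ∈ I, 0 < lam * Real.exp (y x) + c) :
    EqOn (Real.exp ∘ symmetryFlow lam c y) (fun x => lam * (Real.exp ∘ y) x + c) I :=
  fun x hx => Real.exp_log (hpos x hx)

theorem symmetry_flow_maps_solutions_to_solutions_class1_general (hI : IsOpen I)
    (hy : ThreeDiffOn y I) (hODE : SolvesODEOn p q y I)
    (hpos : ∀ x ∈ I, 0 < lam * Real.exp (y x) + c) :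
    ThreeDiffOn (symmetryFlow lam c y) I ∧ SolvesODEOn p q (symmetryFlow lam c y) I := by
  have hflow : ThreeDiffOn (symmetryFlow lam c y) I := hy.symmetryFlow hI hpos
  have hlinear : SolvesLinearODEOn p q (Real.exp ∘ y) I :=
    (solvesODEOn_iff_solvesLinearODEOn_exp_comp hI hy).1 hODE
  have hlinear_flow : SolvesLinearODEOn p q (Real.exp ∘ symmetryFlow lam c y) I :=
    (hlinear.const_mul_add_const lam c).congr hI (exp_comp_symmetryFlow_eqOn hpos)
  exact ⟨hflow, (solvesODEOn_iff_solvesLinearODEOn_exp_comp hI hflow).2 hlinear_flow⟩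

end

theorem symmetry_flow_maps_solutions_to_solutions_class1
    (I : Set ℝ) (hI : IsOpen I ∧ I.OrdConnected)
    (hI2 : ∀ x ∈ I, x + 2 ≠ 0)
    (y : ℝ → ℝ) (hy : ThreeDiffOn y I)
    (hODE : ∀ x ∈ I, (x + 2) * deriv^[3] y x =
      ((x + 3) - 3 * (x + 2) * deriv y x) * deriv^[2] y x -
        ((x + 2) * deriv y x - (x + 3)) * (deriv y x) ^ 2)
    (lam c : ℝ) (hlam : 0 < lam)
    (hpos : ∀ x ∈ I, 0 < lam * Real.exp (y x) + c) :
    ThreeDiffOn (fun x => Real.log (lam * Real.exp (y x) + c)) I ∧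
    ∀ x ∈ I, (x + 2) * deriv^[3] (fun x => Real.log (lam * Real.exp (y x) + c)) x =
      ((x + 3) - 3 * (x + 2) * deriv (fun x => Real.log (lam * Real.exp (y x) + c)) x) *
          deriv^[2] (fun x => Real.log (lam * Real.exp (y x) + c)) x -
        ((x + 2) * deriv (fun x => Real.log (lam * Real.exp (y x) + c)) x - (x + 3)) *
          (deriv (fun x => Real.log (lam * Real.exp (y x) + c)) x) ^ 2 :=
  symmetry_flow_maps_solutions_to_solutions_class1_general (p := fun x => x + 2)
    (q := fun x => x + 3) hI.1 hy hODE hpos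
end

section
/- Let I ⊆ ℝ be an open interval and let y : ℝ → ℝ be three times differentiable on I with y'(x) ≠ 0 for all x ∈ I, satisfying the nonlinear third-order ODE y'(x)·y'''(x) = 3·y''(x)² + x·y'(x)⁵ for all x ∈ I. Then there exist constants c₀, c₁, c₂ ∈ ℝ such that for all x ∈ I: x = c₀·e^{−y(x)} + e^{y(x)/2}·(c₁·cos(√3·y(x)/2) + c₂·sin(√3·y(x)/2)). (This expresses the linearization of the Class 2a example (5.5) of Section 5: in the coordinates x = e^{−r}v(r), y = r the equation becomes v''' − 3v'' + 3v' = 0, whose general solution yields the stated closed form.) -/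
/-!
Along a solution, regard `x` as a function `X` of `t = y`. The first three derivatives of the
inverse function are `X' = 1 / y'`, `X'' = -y'' / y' ^ 3` and
`X''' = (3 * y'' ^ 2 - y' * y''') / y' ^ 5`, so the equation says `X''' = -X`. For every cube root
`l` of `-1`, the combination `X'' + l * X' + l ^ 2 * X` is multiplied by `l` under differentiation,
hence is a multiple of `exp (l * t)`. Taking `l = -1` and `l = (1 + √3 * I) / 2` determines `X`.
-/

section ConstantMulExp

variable {𝕜 : Type*} [RCLike 𝕜] [NormedAlgebra 𝕜 ℂ]

theorem exists_eq_const_mul_cexp_of_hasDerivAt {s : Set 𝕜} (hs : IsOpen s)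
    (hs' : IsPreconnected s) {z φ φ' : 𝕜 → ℂ} (hφ : ∀ x ∈ s, HasDerivAt φ (φ' x) x)
    (hz : ∀ x ∈ s, HasDerivAt z (φ' x * z x) x) :
    ∃ k : ℂ, ∀ x ∈ s, z x = k * Complex.exp (φ x) := by
  have hquot : ∀ x ∈ s, HasDerivAt (fun x ↦ Complex.exp (-φ x) * z x) 0 x := fun x hx ↦
    ((hφ x hx).fun_neg.cexp.fun_mul (hz x hx)).congr_deriv (by ring)
  obtain ⟨k, hk⟩ := hs.exists_is_const_of_deriv_eq_zero hs'
    (fun x hx ↦ (hquot x hx).differentiableAt.differentiableWithinAt)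
    (fun x hx ↦ (hquot x hx).deriv)
  refine ⟨k, fun x hx ↦ ?_⟩
  rw [← hk x hx, mul_right_comm, ← Complex.exp_add, neg_add_cancel, Complex.exp_zero, one_mul]

end ConstantMulExp

theorem re_mul_cexp (k w : ℂ) :
    (k * Complex.exp w).re =
      Real.exp w.re * (k.re * Real.cos w.im - k.im * Real.sin w.im) := by
  rw [Complex.mul_re, Complex.exp_re, Complex.exp_im]
  ring

section InverseDerivatives

variable {𝕜 : Type*} [NontriviallyNormedField 𝕜]

/-- The first derivative of the inverse function of `y`, evaluated at `y x`; it is `0` where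
`deriv y` vanishes. -/
noncomputable def inverseDeriv (y : 𝕜 → 𝕜) (x : 𝕜) : 𝕜 :=
  (deriv y x)⁻¹

/-- The second derivative of the inverse function of `y`, evaluated at `y x` and expressed through
the derivatives of `y` at `x`; it is `0` where `deriv y` vanishes. -/
noncomputable def inverseDeriv₂ (y : 𝕜 → 𝕜) (x : 𝕜) : 𝕜 :=
  -deriv^[2] y x / deriv y x ^ 3

variable {y : 𝕜 → 𝕜} {x : 𝕜}

theorem hasDerivAt_inverseDeriv (hy₂ : DifferentiableAt 𝕜 (deriv y) x) (hy' : deriv y x ≠ 0) :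
    HasDerivAt (inverseDeriv y) (deriv y x * inverseDeriv₂ y x) x := by
  have hy'' : HasDerivAt (deriv y) (deriv^[2] y x) x := hy₂.hasDerivAt
  refine (hy''.fun_inv hy').congr_deriv ?_
  rw [inverseDeriv₂]
  field_simp

theorem hasDerivAt_inverseDeriv₂ (hy₂ : DifferentiableAt 𝕜 (deriv y) x)
    (hy₃ : DifferentiableAt 𝕜 (deriv^[2] y) x) (hy' : deriv y x ≠ 0) :
    HasDerivAt (inverseDeriv₂ y)
      (deriv y x *
        ((3 * deriv^[2] y x ^ 2 - deriv y x * deriv^[3] y x) / deriv y x ^ 5)) x := by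
  have hy'' : HasDerivAt (deriv y) (deriv^[2] y x) x := hy₂.hasDerivAt
  have hy''' : HasDerivAt (deriv^[2] y) (deriv^[3] y x) x := by
    simpa only [Function.iterate_succ_apply'] using hy₃.hasDerivAt
  refine (hy'''.fun_neg.fun_div (hy''.fun_pow 3) (pow_ne_zero 3 hy')).congr_deriv ?_
  field_simp
  push_cast
  ring

end InverseDerivatives

/-- On `s`, the functions `u₀`, `u₁`, `u₂` behave like `X ∘ y`, `X' ∘ y`, `X'' ∘ y` for a solution
`X` of the linear equation `X''' = a * X`. Stating the equation through the chain rule avoids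
having to construct `X`, that is, to invert `y`. -/
structure IsCubicChain (a : ℝ) (s : Set ℝ) (y u₀ u₁ u₂ : ℝ → ℝ) : Prop where
  differentiableAt : ∀ x ∈ s, DifferentiableAt ℝ y x
  hasDerivAt_zero : ∀ x ∈ s, HasDerivAt u₀ (deriv y x * u₁ x) x
  hasDerivAt_one : ∀ x ∈ s, HasDerivAt u₁ (deriv y x * u₂ x) x
  hasDerivAt_two : ∀ x ∈ s, HasDerivAt u₂ (deriv y x * (a * u₀ x)) x

/-- The combination of a chain for `X''' = l ^ 3 * X` on which differentiation with respect to `y`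
acts as multiplication by `l`. -/
noncomputable def eigenCombination (l : ℂ) (u₀ u₁ u₂ : ℝ → ℝ) (x : ℝ) : ℂ :=
  u₂ x + l * u₁ x + l ^ 2 * u₀ x

namespace IsCubicChain

variable {a : ℝ} {s : Set ℝ} {y u₀ u₁ u₂ : ℝ → ℝ}

theorem hasDerivAt_eigenCombination (h : IsCubicChain a s y u₀ u₁ u₂) {l : ℂ} (hl : l ^ 3 = a)
    {x : ℝ} (hx : x ∈ s) :
    HasDerivAt (eigenCombination l u₀ u₁ u₂)
      (l * deriv y x * eigenCombination l u₀ u₁ u₂ x) x := by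
  refine (((h.hasDerivAt_two x hx).ofReal_comp.fun_add
    ((h.hasDerivAt_one x hx).ofReal_comp.const_mul l)).fun_add
    ((h.hasDerivAt_zero x hx).ofReal_comp.const_mul (l ^ 2))).congr_deriv ?_
  rw [eigenCombination]
  push_cast
  linear_combination -(deriv y x * u₀ x : ℂ) * hl

theorem exists_re_mul_eigenCombination_eq (h : IsCubicChain a s y u₀ u₁ u₂) (hs : IsOpen s)
    (hs' : IsPreconnected s) {l : ℂ} (hl : l ^ 3 = a) (m : ℂ) :
    ∃ p q : ℝ, ∀ x ∈ s, (m * eigenCombination l u₀ u₁ u₂ x).re =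
      Real.exp (l.re * y x) * (p * Real.cos (l.im * y x) + q * Real.sin (l.im * y x)) := by
  obtain ⟨k, hk⟩ := exists_eq_const_mul_cexp_of_hasDerivAt hs hs'
    (fun x hx ↦ (h.differentiableAt x hx).hasDerivAt.ofReal_comp.const_mul l)
    (fun x hx ↦ h.hasDerivAt_eigenCombination hl hx)
  refine ⟨(m * k).re, -(m * k).im, fun x hx ↦ ?_⟩
  rw [hk x hx, ← mul_assoc, re_mul_cexp, Complex.re_mul_ofReal, Complex.im_mul_ofReal, neg_mul,
    ← sub_eq_add_neg]

end IsCubicChain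

/-- The cube root `exp (π * I / 3)` of `-1`, in Cartesian form. -/
noncomputable def cubeRootNegOne : ℂ :=
  ⟨1 / 2, √3 / 2⟩

theorem cubeRootNegOne_sq : cubeRootNegOne ^ 2 = cubeRootNegOne - 1 := by
  have hsqrt : √3 * √3 = 3 := Real.mul_self_sqrt (by norm_num)
  apply Complex.ext
  · simp only [cubeRootNegOne, sq, Complex.mul_re, Complex.sub_re, Complex.one_re]
    linarith
  · simp only [cubeRootNegOne, sq, Complex.mul_im, Complex.sub_im, Complex.one_im]
    ring

theorem cubeRootNegOne_pow_three : cubeRootNegOne ^ 3 = -1 := by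
  linear_combination (cubeRootNegOne + 1) * cubeRootNegOne_sq

-- Inversion of the eigencombinations `z_l` as `3 * u₀ = ∑ l, l⁻² * z_l = -∑ l, l * z_l` over the
-- cube roots `l` of `-1`; the two non-real roots contribute conjugate terms.
theorem three_mul_eq_eigenCombination (u₀ u₁ u₂ : ℝ → ℝ) (x : ℝ) :
    3 * u₀ x = -((-1 * eigenCombination (-1) u₀ u₁ u₂ x).re +
      2 * (cubeRootNegOne * eigenCombination cubeRootNegOne u₀ u₁ u₂ x).re) := by
  have hreal : -1 * eigenCombination (-1) u₀ u₁ u₂ x = (u₁ x - u₂ x - u₀ x : ℝ) := by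
    rw [eigenCombination]
    push_cast
    ring
  have hcomplex : cubeRootNegOne * eigenCombination cubeRootNegOne u₀ u₁ u₂ x =
      cubeRootNegOne * (u₂ x + u₁ x : ℝ) - (u₁ x + u₀ x : ℝ) := by
    rw [eigenCombination]
    push_cast
    linear_combination (u₁ x : ℂ) * cubeRootNegOne_sq + (u₀ x : ℂ) * cubeRootNegOne_pow_three
  have hre : cubeRootNegOne.re = 1 / 2 := rfl
  rw [hreal, hcomplex, Complex.sub_re, Complex.re_mul_ofReal, Complex.ofReal_re,
    Complex.ofReal_re, hre]
  ring

theorem IsCubicChain.exists_eq_exp_add_exp_mul_cos_add_sin {s : Set ℝ} {y u₀ u₁ u₂ : ℝ → ℝ}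
    (h : IsCubicChain (-1) s y u₀ u₁ u₂) (hs : IsOpen s) (hs' : IsPreconnected s) :
    ∃ c₀ c₁ c₂ : ℝ, ∀ x ∈ s, u₀ x = c₀ * Real.exp (-(y x)) +
      Real.exp (y x / 2) * (c₁ * Real.cos (√3 * y x / 2) + c₂ * Real.sin (√3 * y x / 2)) := by
  obtain ⟨p₀, q₀, hreal⟩ := h.exists_re_mul_eigenCombination_eq hs hs' (l := -1) (by norm_num) (-1)
  obtain ⟨p, q, hcomplex⟩ := h.exists_re_mul_eigenCombination_eq hs hs'
    (by simpa using cubeRootNegOne_pow_three) cubeRootNegOne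
  refine ⟨-p₀ / 3, -2 * p / 3, -2 * q / 3, fun x hx ↦ ?_⟩
  have hsum := three_mul_eq_eigenCombination u₀ u₁ u₂ x
  rw [hreal x hx, hcomplex x hx] at hsum
  have hhalf : 1 / 2 * y x = y x / 2 := by ring
  have hangle : √3 / 2 * y x = √3 * y x / 2 := by ring
  simp only [cubeRootNegOne, hhalf, hangle, Complex.neg_re, Complex.one_re, Complex.neg_im,
    Complex.one_im, neg_zero, zero_mul, neg_mul, one_mul, Real.cos_zero, Real.sin_zero] at hsum
  linear_combination hsum / 3

theorem isCubicChain_inverseDeriv {I : Set ℝ} {y : ℝ → ℝ} (hy : ThreeDiffOn y I)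
    (hy' : ∀ x ∈ I, deriv y x ≠ 0) {a : ℝ}
    (hODE : ∀ x ∈ I, deriv y x * deriv^[3] y x =
      3 * (deriv^[2] y x) ^ 2 - a * x * (deriv y x) ^ 5) :
    IsCubicChain a I y id (inverseDeriv y) (inverseDeriv₂ y) where
  differentiableAt x hx := (hy x hx).1
  hasDerivAt_zero x hx := (hasDerivAt_id x).congr_deriv (mul_inv_cancel₀ (hy' x hx)).symm
  hasDerivAt_one x hx := hasDerivAt_inverseDeriv (hy x hx).2.1 (hy' x hx)
  hasDerivAt_two x hx := by
    refine (hasDerivAt_inverseDeriv₂ (hy x hx).2.1 (hy x hx).2.2 (hy' x hx)).congr_deriv ?_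
    rw [hODE x hx, sub_sub_cancel, mul_div_cancel_right₀ _ (pow_ne_zero 5 (hy' x hx)), id]

theorem linearization_class2a
    (I : Set ℝ) (hI : IsOpen I ∧ I.OrdConnected)
    (y : ℝ → ℝ) (hy : ThreeDiffOn y I)
    (hy' : ∀ x ∈ I, deriv y x ≠ 0)
    (hODE : ∀ x ∈ I, deriv y x * deriv^[3] y x =
      3 * (deriv^[2] y x) ^ 2 + x * (deriv y x) ^ 5) :
    ∃ c₀ c₁ c₂ : ℝ, ∀ x ∈ I,
      x = c₀ * Real.exp (-(y x)) +
        Real.exp (y x / 2) *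
          (c₁ * Real.cos (Real.sqrt 3 * y x / 2) + c₂ * Real.sin (Real.sqrt 3 * y x / 2)) := by
  have hchain : IsCubicChain (-1) I y id (inverseDeriv y) (inverseDeriv₂ y) :=
    isCubicChain_inverseDeriv hy hy' fun x hx ↦ by rw [hODE x hx]; ring
  exact hchain.exists_eq_exp_add_exp_mul_cos_add_sin hI.1 hI.2.isPreconnected
end

section
/- Let I ⊆ ℝ be an open interval and let y : ℝ → ℝ be three times differentiable on I with y'(x) ≠ 0 for all x ∈ I, satisfying the nonlinear third-order ODE y'(x)·y'''(x) = x·y'(x)⁵ + y'(x)⁴ − y''(x)·y'(x)² + 3·y''(x)² for all x ∈ I. Then there exist constants c₀, c₁, c₂ ∈ ℝ such that for all x ∈ I: x = c₀·e^{−y(x)} + c₁·cos(y(x)) + c₂·sin(y(x)). (This expresses the linearization of the Class 2b example (5.11) of Section 5: in the coordinates x = e^{−r}v(r), y = r the equation becomes v''' − 2v'' + 2v' = 0, whose general solution yields the stated closed form.) -/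
/-!
Exchange the roles of the variables: as a function of `y`, the abscissa `x` has derivatives
`1 / y'`, `-y'' / y' ^ 3` and `(3 y'' ^ 2 - y' y''') / y' ^ 5`, and the equation becomes
`(D + 1) (D ^ 2 + 1) x = 0` with `D = d/dy`. Hence `(D ^ 2 + 1) x` is a multiple of `exp (-y)`,
`(D + 1) x` is a combination of `cos y` and `sin y`, and `x` is recovered from
`2 = (D ^ 2 + 1) + (1 - D) (D + 1)`. The inverse function is never formed: `D` is read as
differentiation in `x` divided by `y'`.
-/

section AlongFunction

variable {E : Type*} [NormedAddCommGroup E] [NormedSpace ℝ E] {I : Set ℝ} {y y' : ℝ → ℝ}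

theorem exists_forall_mem_eq_of_hasDerivWithinAt_zero (hI : I.OrdConnected) {f : ℝ → E}
    (hf : ∀ x ∈ I, HasDerivWithinAt f 0 I x) : ∃ c : E, ∀ x ∈ I, f x = c := by
  rcases I.eq_empty_or_nonempty with rfl | ⟨x₀, hx₀⟩
  · exact ⟨0, by simp⟩
  · refine ⟨f x₀, fun x hx ↦ ?_⟩
    have hnorm : ‖f x - f x₀‖ ≤ 0 * ‖x - x₀‖ :=
      hI.convex.norm_image_sub_le_of_norm_hasDerivWithin_le hf (by simp) hx₀ hx
    simpa [sub_eq_zero] using hnorm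

theorem exists_eq_exp_smul_of_hasDerivWithinAt (hI : I.OrdConnected)
    (hy : ∀ x ∈ I, HasDerivWithinAt y (y' x) I x) {u : ℝ → E}
    (hu : ∀ x ∈ I, HasDerivWithinAt u (y' x • u x) I x) :
    ∃ c : E, ∀ x ∈ I, u x = Real.exp (y x) • c := by
  obtain ⟨c, hc⟩ : ∃ c : E, ∀ x ∈ I, Real.exp (-y x) • u x = c := by
    refine exists_forall_mem_eq_of_hasDerivWithinAt_zero hI fun x hx ↦ ?_
    exact ((hy x hx).fun_neg.exp.fun_smul (hu x hx)).congr_deriv (by module)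
  refine ⟨c, fun x hx ↦ ?_⟩
  rw [← hc x hx, smul_smul, ← Real.exp_add, add_neg_cancel, Real.exp_zero, one_smul]

theorem exists_eq_cos_smul_add_sin_smul_of_hasDerivWithinAt (hI : I.OrdConnected)
    (hy : ∀ x ∈ I, HasDerivWithinAt y (y' x) I x) {u v : ℝ → E}
    (hu : ∀ x ∈ I, HasDerivWithinAt u (y' x • v x) I x)
    (hv : ∀ x ∈ I, HasDerivWithinAt v (-(y' x • u x)) I x) :
    ∃ a b : E, ∀ x ∈ I, u x = Real.cos (y x) • a + Real.sin (y x) • b ∧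
      v x = Real.cos (y x) • b - Real.sin (y x) • a := by
  obtain ⟨a, ha⟩ : ∃ a : E, ∀ x ∈ I, Real.cos (y x) • u x - Real.sin (y x) • v x = a := by
    refine exists_forall_mem_eq_of_hasDerivWithinAt_zero hI fun x hx ↦ ?_
    exact (((hy x hx).cos.fun_smul (hu x hx)).fun_sub
      ((hy x hx).sin.fun_smul (hv x hx))).congr_deriv (by module)
  obtain ⟨b, hb⟩ : ∃ b : E, ∀ x ∈ I, Real.sin (y x) • u x + Real.cos (y x) • v x = b := by
    refine exists_forall_mem_eq_of_hasDerivWithinAt_zero hI fun x hx ↦ ?_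
    exact (((hy x hx).sin.fun_smul (hu x hx)).fun_add
      ((hy x hx).cos.fun_smul (hv x hx))).congr_deriv (by module)
  refine ⟨a, b, fun x hx ↦ ?_⟩
  have hsq : Real.sin (y x) ^ 2 + Real.cos (y x) ^ 2 = 1 := Real.sin_sq_add_cos_sq (y x)
  rw [← ha x hx, ← hb x hx]
  constructor
  · linear_combination (norm := module) -(hsq • u x)
  · linear_combination (norm := module) -(hsq • v x)

theorem exists_eq_exp_neg_cos_sin_of_hasDerivWithinAt (hI : I.OrdConnected)
    (hy : ∀ x ∈ I, HasDerivWithinAt y (y' x) I x) {u v w : ℝ → E}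
    (hu : ∀ x ∈ I, HasDerivWithinAt u (y' x • v x) I x)
    (hv : ∀ x ∈ I, HasDerivWithinAt v (y' x • w x) I x)
    (hw : ∀ x ∈ I, HasDerivWithinAt w (-(y' x • (u x + v x + w x))) I x) :
    ∃ c₀ c₁ c₂ : E, ∀ x ∈ I,
      u x = Real.exp (-y x) • c₀ + Real.cos (y x) • c₁ + Real.sin (y x) • c₂ := by
  obtain ⟨c, hc⟩ : ∃ c : E, ∀ x ∈ I, u x + w x = Real.exp (-y x) • c :=
    exists_eq_exp_smul_of_hasDerivWithinAt hI (fun x hx ↦ (hy x hx).fun_neg)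
      fun x hx ↦ ((hu x hx).fun_add (hw x hx)).congr_deriv (by module)
  obtain ⟨a, b, hab⟩ : ∃ a b : E, ∀ x ∈ I,
      u x + v x = Real.cos (y x) • a + Real.sin (y x) • b ∧
        v x + w x = Real.cos (y x) • b - Real.sin (y x) • a :=
    exists_eq_cos_smul_add_sin_smul_of_hasDerivWithinAt hI hy
      (fun x hx ↦ ((hu x hx).fun_add (hv x hx)).congr_deriv (by module))
      fun x hx ↦ ((hv x hx).fun_add (hw x hx)).congr_deriv (by module)
  refine ⟨(1 / 2 : ℝ) • c, (1 / 2 : ℝ) • (a - b), (1 / 2 : ℝ) • (a + b), fun x hx ↦ ?_⟩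
  obtain ⟨huv, hvw⟩ := hab x hx
  calc u x = (1 / 2 : ℝ) • ((u x + w x) + (u x + v x) - (v x + w x)) := by module
    _ = _ := by rw [hc x hx, huv, hvw]; module

end AlongFunction

theorem hasDerivWithinAt_neg_div_pow_three {𝕜 : Type*} [NontriviallyNormedField 𝕜]
    {p q : 𝕜 → 𝕜} {s x : 𝕜} {I : Set 𝕜} (hp : HasDerivWithinAt p (q x) I x)
    (hq : HasDerivWithinAt q s I x) (hpx : p x ≠ 0) :
    HasDerivWithinAt (fun t ↦ -q t / p t ^ 3)
      (p x * ((3 * q x ^ 2 - p x * s) / p x ^ 5)) I x := by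
  refine (hq.fun_neg.fun_div (hp.fun_pow 3) (pow_ne_zero 3 hpx)).congr_deriv ?_
  push_cast
  field_simp
  ring

theorem linearization_class2b_general {I : Set ℝ} (hI : I.OrdConnected) {y p q s : ℝ → ℝ}
    (hy : ∀ x ∈ I, HasDerivWithinAt y (p x) I x)
    (hp : ∀ x ∈ I, HasDerivWithinAt p (q x) I x)
    (hq : ∀ x ∈ I, HasDerivWithinAt q (s x) I x)
    (hp_ne : ∀ x ∈ I, p x ≠ 0)
    (hODE : ∀ x ∈ I, p x * s x = x * p x ^ 5 + p x ^ 4 - q x * p x ^ 2 + 3 * q x ^ 2) :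
    ∃ c₀ c₁ c₂ : ℝ, ∀ x ∈ I,
      x = c₀ * Real.exp (-y x) + c₁ * Real.cos (y x) + c₂ * Real.sin (y x) := by
  have hx_deriv : ∀ x ∈ I, HasDerivWithinAt (fun t ↦ t) (p x • (p x)⁻¹) I x := fun x hx ↦
    (hasDerivWithinAt_id x I).congr_deriv (mul_inv_cancel₀ (hp_ne x hx)).symm
  have hinv_deriv : ∀ x ∈ I,
      HasDerivWithinAt (fun t ↦ (p t)⁻¹) (p x • (-q x / p x ^ 3)) I x := fun x hx ↦ by
    have hpx := hp_ne x hx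
    exact ((hp x hx).fun_inv hpx).congr_deriv (by simp only [smul_eq_mul]; field_simp)
  have hlinear : ∀ x ∈ I,
      (3 * q x ^ 2 - p x * s x) / p x ^ 5 = -(x + (p x)⁻¹ + -q x / p x ^ 3) := fun x hx ↦ by
    have hpx := hp_ne x hx
    rw [hODE x hx]
    field_simp
    ring
  have hsecond_deriv : ∀ x ∈ I, HasDerivWithinAt (fun t ↦ -q t / p t ^ 3)
      (-(p x • (x + (p x)⁻¹ + -q x / p x ^ 3))) I x := fun x hx ↦
    (hasDerivWithinAt_neg_div_pow_three (hp x hx) (hq x hx) (hp_ne x hx)).congr_deriv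
      (by rw [hlinear x hx, smul_eq_mul, mul_neg])
  simpa only [smul_eq_mul, mul_comm] using
    exists_eq_exp_neg_cos_sin_of_hasDerivWithinAt hI hy hx_deriv hinv_deriv hsecond_deriv

theorem linearization_class2b
    (I : Set ℝ) (hI : IsOpen I ∧ I.OrdConnected)
    (y : ℝ → ℝ) (hy : ThreeDiffOn y I)
    (hy' : ∀ x ∈ I, deriv y x ≠ 0)
    (hODE : ∀ x ∈ I, deriv y x * deriv^[3] y x =
      x * (deriv y x) ^ 5 + (deriv y x) ^ 4 - deriv^[2] y x * (deriv y x) ^ 2 +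
        3 * (deriv^[2] y x) ^ 2) :
    ∃ c₀ c₁ c₂ : ℝ, ∀ x ∈ I,
      x = c₀ * Real.exp (-(y x)) + c₁ * Real.cos (y x) + c₂ * Real.sin (y x) :=
  linearization_class2b_general hI.2 (fun x hx ↦ (hy x hx).1.hasDerivAt.hasDerivWithinAt)
    (fun x hx ↦ (hy x hx).2.1.hasDerivAt.hasDerivWithinAt)
    (fun x hx ↦ (hy x hx).2.2.hasDerivAt.hasDerivWithinAt) hy' hODE
end

section
/- Let a be a real number with a ≠ −3 and set b = (a² − 3a)/9. Let I ⊆ ℝ be an open interval and let y : ℝ → ℝ be three times differentiable on I with y(x) > 0 for all x ∈ I, satisfying y(x)²·y'''(x) + a·y(x)·y'(x)·y''(x) + b·y'(x)³ = 0 for all x ∈ I. Fix t ∈ ℝ and let J = { X ∈ ℝ : 1 + tX/2 > 0 and X/(1 + tX/2) ∈ I }. Then the function Y(X) = (1 + tX/2)^{6/(a+3)} · y( X/(1 + tX/2) ) is three times differentiable on J, positive on J, and satisfies Y(X)²·Y'''(X) + a·Y(X)·Y'(X)·Y''(X) + b·Y'(X)³ = 0 for all X ∈ J. (This verifies that the flow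 of the projective symmetry generator e₇ = (x²/2)∂_x + (3xy/(a+3))∂_y of equation (5.13) maps solutions to solutions.) -/
/-!
Write `k = (a + 3) / 3`, so that `a = 3 (k - 1)` and `b = (k - 1) (k - 2)`. Then
`(y ^ k)''' = k y ^ (k - 3) (y² y''' + a y y' y'' + b y' ³)`, so the substitution `u = y ^ k` turns
the equation into `u''' = 0`. In terms of `u`, the symmetry reads `U X = (γ X + δ)² u (M X)` with
`M X = (α X + β) / (γ X + δ)`, and Bol's lemma says that
`U''' = (α δ - β γ)³ (γ X + δ)⁻⁴ u''' ∘ M`; hence `u''' = 0` implies `U''' = 0`.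
-/

open Set

/-- The functions `f₁`, `f₂`, `f₃` are the first three derivatives of `f` at the points of `I`. -/
def HasThreeDerivsOn (f f₁ f₂ f₃ : ℝ → ℝ) (I : Set ℝ) : Prop :=
  ∀ x ∈ I, HasDerivAt f (f₁ x) x ∧ HasDerivAt f₁ (f₂ x) x ∧ HasDerivAt f₂ (f₃ x) x

/-- The positive solutions on `I` of `y² y''' + a y y' y'' + b y' ³ = 0`. -/
def IsPositiveSolutionOn (a b : ℝ) (y : ℝ → ℝ) (I : Set ℝ) : Prop :=
  ThreeDiffOn y I ∧ (∀ x ∈ I, 0 < y x) ∧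
    ∀ x ∈ I, (y x) ^ 2 * deriv^[3] y x +
      a * y x * deriv y x * deriv^[2] y x + b * (deriv y x) ^ 3 = 0

theorem ThreeDiffOn.hasThreeDerivsOn {f : ℝ → ℝ} {I : Set ℝ} (hf : ThreeDiffOn f I) :
    HasThreeDerivsOn f (deriv f) (deriv^[2] f) (deriv^[3] f) I := fun x hx =>
  have ⟨hf₀, hf₁, hf₂⟩ := hf x hx
  ⟨hf₀.hasDerivAt, hf₁.hasDerivAt, by
    simpa only [Function.iterate_succ_apply' deriv 2] using hf₂.hasDerivAt⟩

namespace HasThreeDerivsOn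

variable {f f₁ f₂ f₃ g : ℝ → ℝ} {I : Set ℝ}

theorem congr (hf : HasThreeDerivsOn f f₁ f₂ f₃ I) (hI : IsOpen I) (hgf : EqOn g f I) :
    HasThreeDerivsOn g f₁ f₂ f₃ I := fun x hx =>
  have ⟨hf₀, hf₁, hf₂⟩ := hf x hx
  ⟨hf₀.congr_of_eventuallyEq (hgf.eventuallyEq_of_mem (hI.mem_nhds hx)), hf₁, hf₂⟩

theorem eqOn_deriv (hf : HasThreeDerivsOn f f₁ f₂ f₃ I) : EqOn (deriv f) f₁ I :=
  fun x hx => (hf x hx).1.deriv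

theorem hasDerivAt_deriv (hf : HasThreeDerivsOn f f₁ f₂ f₃ I) (hI : IsOpen I) {x : ℝ}
    (hx : x ∈ I) : HasDerivAt (deriv f) (f₂ x) x :=
  (hf x hx).2.1.congr_of_eventuallyEq (hf.eqOn_deriv.eventuallyEq_of_mem (hI.mem_nhds hx))

theorem eqOn_deriv_two (hf : HasThreeDerivsOn f f₁ f₂ f₃ I) (hI : IsOpen I) :
    EqOn (deriv^[2] f) f₂ I :=
  fun _ hx => (hf.hasDerivAt_deriv hI hx).deriv

theorem hasDerivAt_deriv_two (hf : HasThreeDerivsOn f f₁ f₂ f₃ I) (hI : IsOpen I) {x : ℝ}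
    (hx : x ∈ I) : HasDerivAt (deriv^[2] f) (f₃ x) x :=
  (hf x hx).2.2.congr_of_eventuallyEq ((hf.eqOn_deriv_two hI).eventuallyEq_of_mem (hI.mem_nhds hx))

theorem eqOn_deriv_three (hf : HasThreeDerivsOn f f₁ f₂ f₃ I) (hI : IsOpen I) :
    EqOn (deriv^[3] f) f₃ I := fun x hx => by
  rw [Function.iterate_succ_apply' deriv 2]
  exact (hf.hasDerivAt_deriv_two hI hx).deriv

theorem threeDiffOn (hf : HasThreeDerivsOn f f₁ f₂ f₃ I) (hI : IsOpen I) : ThreeDiffOn f I :=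
  fun x hx => ⟨(hf x hx).1.differentiableAt, (hf.hasDerivAt_deriv hI hx).differentiableAt,
    (hf.hasDerivAt_deriv_two hI hx).differentiableAt⟩

theorem rpow_const (hf : HasThreeDerivsOn f f₁ f₂ f₃ I) (hpos : ∀ x ∈ I, 0 < f x) (k : ℝ) :
    HasThreeDerivsOn (fun x => f x ^ k)
      (fun x => k * (f x ^ (k - 1) * f₁ x))
      (fun x => k * (f x ^ (k - 1) * f₂ x + (k - 1) * f x ^ (k - 2) * f₁ x ^ 2))
      (fun x => k * f x ^ (k - 3) *
        (f x ^ 2 * f₃ x + 3 * (k - 1) * f x * f₁ x * f₂ x + (k - 1) * (k - 2) * f₁ x ^ 3)) I := by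
  intro x hx
  obtain ⟨hf₀, hf₁, hf₂⟩ := hf x hx
  have hfx : 0 < f x := hpos x hx
  have hpow (p : ℝ) : HasDerivAt (fun x => f x ^ p) (f₁ x * p * f x ^ (p - 1)) x :=
    hf₀.rpow_const (Or.inl hfx.ne')
  refine ⟨(hpow k).congr_deriv (by ring),
    (((hpow (k - 1)).mul hf₁).const_mul k).congr_deriv ?_,
    ((((hpow (k - 1)).mul hf₂).add
      (((hpow (k - 2)).const_mul (k - 1)).mul (hf₁.pow 2))).const_mul k).congr_deriv ?_⟩
  all_goals
    simp only [Real.rpow_sub hfx, Real.rpow_one, Real.rpow_ofNat, Pi.pow_apply]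
    field_simp
    ring

end HasThreeDerivsOn

section Mobius

/-- The fractional linear map `X ↦ (α X + β) / (γ X + δ)`, by which projective symmetries act on the
independent variable. Its value is the junk `0` at a zero of the denominator. -/
noncomputable def mobius (α β γ δ X : ℝ) : ℝ := (β + α * X) / (δ + γ * X)

variable {α β γ δ : ℝ}

theorem hasDerivAt_const_add_mul (c d X : ℝ) : HasDerivAt (fun X => d + c * X) c X := by
  simpa using ((hasDerivAt_id X).const_mul c).const_add d

theorem hasDerivAt_mobius {X : ℝ} (hX : δ + γ * X ≠ 0) :
    HasDerivAt (mobius α β γ δ) ((α * δ - β * γ) / (δ + γ * X) ^ 2) X := by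
  refine ((hasDerivAt_const_add_mul α β X).div (hasDerivAt_const_add_mul γ δ X) hX).congr_deriv ?_
  ring

theorem isOpen_setOf_mobius_mem {I : Set ℝ} (hI : IsOpen I) :
    IsOpen {X : ℝ | 0 < δ + γ * X ∧ mobius α β γ δ X ∈ I} := by
  rw [isOpen_iff_mem_nhds]
  rintro X ⟨hpos, hmem⟩
  have hdenom : ContinuousAt (fun X : ℝ => δ + γ * X) X := by fun_prop
  filter_upwards [hdenom.eventually (lt_mem_nhds hpos),
    (hasDerivAt_mobius hpos.ne').continuousAt.eventually (hI.mem_nhds hmem)] with Z hZpos hZmem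
  exact ⟨hZpos, hZmem⟩

/-- Bol's lemma: with the weight `(γ X + δ)²`, the lower derivatives of `u` cancel from the third
derivative. -/
theorem HasThreeDerivsOn.sq_mul_comp_mobius {u u₁ u₂ u₃ : ℝ → ℝ} {I J : Set ℝ}
    (hu : HasThreeDerivsOn u u₁ u₂ u₃ I) (hdenom : ∀ X ∈ J, δ + γ * X ≠ 0)
    (hmaps : MapsTo (mobius α β γ δ) J I) :
    HasThreeDerivsOn (fun X => (δ + γ * X) ^ 2 * u (mobius α β γ δ X))
      (fun X => 2 * γ * (δ + γ * X) * u (mobius α β γ δ X) +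
        (α * δ - β * γ) * u₁ (mobius α β γ δ X))
      (fun X => 2 * γ ^ 2 * u (mobius α β γ δ X) +
        2 * γ * (α * δ - β * γ) * (u₁ (mobius α β γ δ X) / (δ + γ * X)) +
        (α * δ - β * γ) ^ 2 * (u₂ (mobius α β γ δ X) / (δ + γ * X) ^ 2))
      (fun X => (α * δ - β * γ) ^ 3 * u₃ (mobius α β γ δ X) / (δ + γ * X) ^ 4) J := by
  intro X hX
  obtain ⟨hu₀, hu₁, hu₂⟩ := hu _ (hmaps hX)
  have hs : δ + γ * X ≠ 0 := hdenom X hX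
  have hds : HasDerivAt (fun X => δ + γ * X) γ X := hasDerivAt_const_add_mul γ δ X
  have hM := hasDerivAt_mobius (α := α) (β := β) hs
  have hv₀ := hu₀.comp X hM
  have hv₁ := hu₁.comp X hM
  have hv₂ := hu₂.comp X hM
  refine ⟨((hds.pow 2).mul hv₀).congr_deriv ?_,
    (((hds.const_mul (2 * γ)).mul hv₀).add (hv₁.const_mul (α * δ - β * γ))).congr_deriv ?_,
    (((hv₀.const_mul (2 * γ ^ 2)).add ((hv₁.div hds hs).const_mul (2 * γ * (α * δ - β * γ)))).add
      ((hv₂.div (hds.pow 2) (pow_ne_zero 2 hs)).const_mul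
        ((α * δ - β * γ) ^ 2))).congr_deriv ?_⟩
  all_goals simp only [Function.comp_apply, Pi.pow_apply]
  · field_simp
    ring
  · field_simp
  · field_simp
    ring

end Mobius

theorem isPositiveSolutionOn_iff_deriv_three_rpow_eq_zero {a b : ℝ} (ha : a ≠ -3)
    (hb : b = (a ^ 2 - 3 * a) / 9) {y : ℝ → ℝ} {I : Set ℝ} (hI : IsOpen I) :
    IsPositiveSolutionOn a b y I ↔ (∀ x ∈ I, 0 < y x) ∧
      ThreeDiffOn (fun x => y x ^ ((a + 3) / 3)) I ∧
      ∀ x ∈ I, deriv^[3] (fun x => y x ^ ((a + 3) / 3)) x = 0 := by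
  set k := (a + 3) / 3 with hk
  have hk₀ : k ≠ 0 := div_ne_zero (fun h => ha (by linarith)) three_ne_zero
  have hak : 3 * (k - 1) = a := by rw [hk]; ring
  have hbk : (k - 1) * (k - 2) = b := by rw [hb, hk]; ring
  have deriv_three_rpow (hy : ThreeDiffOn y I) (hpos : ∀ x ∈ I, 0 < y x) {x : ℝ} (hx : x ∈ I) :
      deriv^[3] (fun x => y x ^ k) x = k * y x ^ (k - 3) * (y x ^ 2 * deriv^[3] y x +
        a * y x * deriv y x * deriv^[2] y x + b * deriv y x ^ 3) := by
    rw [(hy.hasThreeDerivsOn.rpow_const hpos k).eqOn_deriv_three hI hx, hak, hbk]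
  constructor
  · rintro ⟨hy, hpos, hode⟩
    refine ⟨hpos, (hy.hasThreeDerivsOn.rpow_const hpos k).threeDiffOn hI, fun x hx => ?_⟩
    rw [deriv_three_rpow hy hpos hx, hode x hx, mul_zero]
  · rintro ⟨hpos, hu, hu₃⟩
    have hroot : EqOn y (fun x => (y x ^ k) ^ k⁻¹) I :=
      fun x hx => (Real.rpow_rpow_inv (hpos x hx).le hk₀).symm
    have hupos : ∀ x ∈ I, 0 < y x ^ k := fun x hx => Real.rpow_pos_of_pos (hpos x hx) k
    have hy : ThreeDiffOn y I :=
      ((hu.hasThreeDerivsOn.rpow_const hupos k⁻¹).congr hI hroot).threeDiffOn hI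
    refine ⟨hy, hpos, fun x hx => ?_⟩
    have hfactor : k * y x ^ (k - 3) ≠ 0 :=
      mul_ne_zero hk₀ (Real.rpow_pos_of_pos (hpos x hx) _).ne'
    exact (mul_eq_zero.1 ((deriv_three_rpow hy hpos hx).symm.trans (hu₃ x hx))).resolve_left hfactor

theorem projective_symmetry_flow_maps_solutions_to_solutions_general {a b : ℝ} (ha : a ≠ -3)
    (hb : b = (a ^ 2 - 3 * a) / 9) {I : Set ℝ} (hI : IsOpen I) {y : ℝ → ℝ}
    (hy : IsPositiveSolutionOn a b y I) (α β γ δ : ℝ) :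
    IsPositiveSolutionOn a b (fun X => (δ + γ * X) ^ (6 / (a + 3)) * y (mobius α β γ δ X))
      {X : ℝ | 0 < δ + γ * X ∧ mobius α β γ δ X ∈ I} := by
  set J := {X : ℝ | 0 < δ + γ * X ∧ mobius α β γ δ X ∈ I}
  have hJ : IsOpen J := isOpen_setOf_mobius_mem hI
  obtain ⟨hpos, hu, hu₃⟩ := (isPositiveSolutionOn_iff_deriv_three_rpow_eq_zero ha hb hI).1 hy
  have hweight : 6 / (a + 3) * ((a + 3) / 3) = 2 := by
    have : a + 3 ≠ 0 := fun h => ha (by linarith)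
    field_simp
    norm_num
  have hU : EqOn
      (fun X => ((δ + γ * X) ^ (6 / (a + 3)) * y (mobius α β γ δ X)) ^ ((a + 3) / 3))
      (fun X => (δ + γ * X) ^ 2 * y (mobius α β γ δ X) ^ ((a + 3) / 3)) J := by
    rintro X ⟨hs, hM⟩
    simp only [Real.mul_rpow (Real.rpow_nonneg hs.le _) (hpos _ hM).le, ← Real.rpow_mul hs.le,
      hweight, Real.rpow_two]
  have hbol := (hu.hasThreeDerivsOn.sq_mul_comp_mobius (fun _ hX => hX.1.ne')
    (fun _ hX => hX.2)).congr hJ hU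
  refine (isPositiveSolutionOn_iff_deriv_three_rpow_eq_zero ha hb hJ).2
    ⟨fun X hX => mul_pos (Real.rpow_pos_of_pos hX.1 _) (hpos _ hX.2), hbol.threeDiffOn hJ,
      fun X hX => ?_⟩
  simp only [hbol.eqOn_deriv_three hJ hX, hu₃ _ hX.2, mul_zero, zero_div]

theorem projective_symmetry_flow_maps_solutions_to_solutions
    (a : ℝ) (ha : a ≠ -3) (b : ℝ) (hb : b = (a ^ 2 - 3 * a) / 9)
    (I : Set ℝ) (hI : IsOpen I ∧ I.OrdConnected)
    (y : ℝ → ℝ) (hy : ThreeDiffOn y I) (hypos : ∀ x ∈ I, 0 < y x)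
    (hODE : ∀ x ∈ I, (y x) ^ 2 * deriv^[3] y x +
      a * y x * deriv y x * deriv^[2] y x + b * (deriv y x) ^ 3 = 0)
    (t : ℝ) (J : Set ℝ)
    (hJ : J = {X : ℝ | 0 < 1 + t * X / 2 ∧ X / (1 + t * X / 2) ∈ I})
    (Y : ℝ → ℝ)
    (hY : Y = fun X => (1 + t * X / 2) ^ (6 / (a + 3)) * y (X / (1 + t * X / 2))) :
    ThreeDiffOn Y J ∧ (∀ X ∈ J, 0 < Y X) ∧
    ∀ X ∈ J, (Y X) ^ 2 * deriv^[3] Y X +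
      a * Y X * deriv Y X * deriv^[2] Y X + b * (deriv Y X) ^ 3 = 0 := by
  suffices IsPositiveSolutionOn a b Y J from this
  simpa only [hJ, hY, mobius, zero_add, one_mul, div_mul_eq_mul_div] using
    projective_symmetry_flow_maps_solutions_to_solutions_general ha hb hI.1
      ⟨hy, hypos, hODE⟩ 1 0 (t / 2) 1
end

section
/- Let I ⊆ ℝ be an open interval and let y : ℝ → ℝ be five times differentiable on I with y'(x) ≠ 0 for all x ∈ I, satisfying the nonlinear fifth-order ODE y'(x)³·y⁽⁵⁾(x) − 15·y'(x)²·y''(x)·y⁽⁴⁾(x) − 10·y'(x)²·y'''(x)² + 105·y'(x)·y''(x)²·y'''(x) − 105·y''(x)⁴ = 0 for all x ∈ I. Then there exist constants c₀, c₁, c₂, c₃, c₄ ∈ ℝ such that x = c₀ + c₁·y(x) + c₂·y(x)² + c₃·y(x)³ + c₄·y(x)⁴ for all x ∈ I. (This is the linearization of the fifth-order maximal-symmetry example (5.20) of Section 5 by the hodograph coordinates x̃ = y, ỹ = x, bringing it to ỹ⁽⁵⁾ = 0: the independent variable is a quartic polynomial in y along every solution.) -/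
/-- `y` is five times differentiable on `I`. -/
def FiveDiffOn (y : ℝ → ℝ) (I : Set ℝ) : Prop :=
  ∀ x ∈ I, DifferentiableAt ℝ y x ∧ DifferentiableAt ℝ (deriv y) x ∧
    DifferentiableAt ℝ (deriv^[2] y) x ∧ DifferentiableAt ℝ (deriv^[3] y) x ∧
    DifferentiableAt ℝ (deriv^[4] y) x

/-!
Where `y' ≠ 0`, the operator `u ↦ u' / y'` is differentiation with respect to `y`. Applied
repeatedly to `u = x` it gives the derivatives of the inverse function,
`dᵏx/dyᵏ = Nₖ / (y') ^ (2k - 1)` with `N₁ = 1` and `Nₖ₊₁ = y' Nₖ' - (2k - 1) y'' Nₖ`, and `N₅` is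
minus the left-hand side of the equation. So the equation says `d⁵x/dy⁵ = 0`, and integrating
five times with respect to `y` presents `x` as a polynomial in `y` of degree less than five.
-/

open Polynomial

theorem exists_mem_degreeLT_succ_derivative_eq {K : Type*} [Field K] [CharZero K] {n : ℕ}
    {p : K[X]} (hp : p ∈ degreeLT K n) : ∃ P ∈ degreeLT K (n + 1), derivative P = p := by
  refine ⟨∑ i ∈ Finset.range n, monomial (i + 1) (p.coeff i / (i + 1)),
    Submodule.sum_mem _ fun i hi ↦ ?_, ?_⟩
  · rw [mem_degreeLT]
    refine (degree_monomial_le _ _).trans_lt ?_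
    exact_mod_cast Nat.succ_lt_succ (Finset.mem_range.mp hi)
  · have hderiv (i : ℕ) : derivative (monomial (i + 1) (p.coeff i / ((i : K) + 1))) =
        monomial i (p.coeff i) := by
      have hi : (i : K) + 1 ≠ 0 := Nat.cast_add_one_ne_zero i
      simp [hi]
    ext j
    simp only [derivative_sum, hderiv, finsetSum_coeff, coeff_monomial, Finset.sum_ite_eq',
      Finset.mem_range]
    split_ifs with hj
    · rfl
    · exact ((degree_lt_iff_coeff_zero p n).mp (mem_degreeLT.mp hp) j (not_lt.mp hj)).symm

section

variable {𝕜 : Type*} [NontriviallyNormedField 𝕜] {x : 𝕜}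

theorem hasDerivAt_div_pow {N p : 𝕜 → 𝕜} {N' p' : 𝕜}
    (hN : HasDerivAt N N' x) (hp : HasDerivAt p p' x) (hx : p x ≠ 0) (m : ℕ) :
    HasDerivAt (fun x ↦ N x / p x ^ m) ((p x * N' - m * p' * N x) / p x ^ (m + 2) * p x) x := by
  refine (hN.fun_div (hp.fun_pow m) (pow_ne_zero m hx)).congr_deriv ?_
  cases m with
  | zero =>
    simp only [Nat.cast_zero]
    field_simp
    ring
  | succ m =>
    simp only [Nat.add_sub_cancel]
    field_simp
    ring

theorem hasDerivAt_inverse_fourth_deriv_numerator {y₁ y₂ y₃ y₄ : 𝕜 → 𝕜} {y₅ : 𝕜}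
    (hy₁ : HasDerivAt y₁ (y₂ x) x) (hy₂ : HasDerivAt y₂ (y₃ x) x)
    (hy₃ : HasDerivAt y₃ (y₄ x) x) (hy₄ : HasDerivAt y₄ y₅ x) :
    HasDerivAt (fun x ↦ 10 * (y₁ x * y₂ x * y₃ x) - 15 * y₂ x ^ 3 - y₁ x ^ 2 * y₄ x)
      (10 * y₁ x * y₃ x ^ 2 - 35 * y₂ x ^ 2 * y₃ x + 8 * y₁ x * y₂ x * y₄ x - y₁ x ^ 2 * y₅) x := by
  refine (((((hy₁.fun_mul hy₂).fun_mul hy₃).const_mul 10).fun_sub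
    ((hy₂.fun_pow 3).const_mul 15)).fun_sub ((hy₁.fun_pow 2).fun_mul hy₄)).congr_deriv ?_
  push_cast
  ring

end

/-- `u` agrees on `s` with a polynomial in the function `y`, of degree less than `n`. The strict
bound makes `n = 0` the statement that `u` vanishes on `s`, so that `n` counts integrations with
respect to `y`. -/
def IsPolynomialInOn {R : Type*} [Semiring R] {α : Type*} (n : ℕ) (y u : α → R) (s : Set α) :
    Prop :=
  ∃ p ∈ degreeLT R n, ∀ x ∈ s, u x = p.eval (y x)

namespace IsPolynomialInOn

variable {n : ℕ}

section

variable {R : Type*} [Semiring R] {α : Type*} {y u : α → R} {s : Set α}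

theorem of_eq_zero (hu : ∀ x ∈ s, u x = 0) : IsPolynomialInOn 0 y u s :=
  ⟨0, zero_mem _, fun x hx ↦ by rw [hu x hx, eval_zero]⟩

theorem exists_eq_sum (hu : IsPolynomialInOn n y u s) :
    ∃ c : ℕ → R, ∀ x ∈ s, u x = ∑ i ∈ Finset.range n, c i * y x ^ i := by
  obtain ⟨p, hp, hup⟩ := hu
  refine ⟨p.coeff, fun x hx ↦ ?_⟩
  rw [hup x hx, eval_eq_sum, ← sum_fin _ (by simp) (mem_degreeLT.mp hp),
    Fin.sum_univ_eq_sum_range fun i ↦ p.coeff i * y x ^ i]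

end

variable {𝕜 : Type*} [RCLike 𝕜] {s : Set 𝕜} {y y₁ y₂ u v : 𝕜 → 𝕜}

theorem of_hasDerivAt (hs : IsOpen s) (hs' : IsPreconnected s)
    (hy : ∀ x ∈ s, HasDerivAt y (y₁ x) x) (hu : ∀ x ∈ s, HasDerivAt u (v x * y₁ x) x)
    (hv : IsPolynomialInOn n y v s) : IsPolynomialInOn (n + 1) y u s := by
  obtain ⟨p, hp, hvp⟩ := hv
  obtain ⟨P, hP, rfl⟩ := exists_mem_degreeLT_succ_derivative_eq hp
  have hsub (x : 𝕜) (hx : x ∈ s) : HasDerivAt (fun x ↦ u x - P.eval (y x)) 0 x := by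
    have hPy := (P.hasDerivAt (y x)).comp x (hy x hx)
    exact ((hu x hx).fun_sub hPy).congr_deriv (by rw [hvp x hx, sub_self])
  obtain ⟨c, hc⟩ := hs.exists_is_const_of_deriv_eq_zero hs'
    (fun x hx ↦ (hsub x hx).differentiableAt.differentiableWithinAt)
    (fun x hx ↦ (hsub x hx).deriv)
  have hC : C c ∈ degreeLT 𝕜 (n + 1) :=
    mem_degreeLT.mpr (degree_C_le.trans_lt (by exact_mod_cast n.succ_pos))
  exact ⟨P + C c, add_mem hP hC, fun x hx ↦ by
    rw [eval_add, eval_C, ← hc x hx, add_sub_cancel]⟩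

theorem of_hasDerivAt_div_pow {N N' M : 𝕜 → 𝕜} (m : ℕ) (hs : IsOpen s)
    (hs' : IsPreconnected s) (hy : ∀ x ∈ s, HasDerivAt y (y₁ x) x)
    (hy₁ : ∀ x ∈ s, HasDerivAt y₁ (y₂ x) x) (hne : ∀ x ∈ s, y₁ x ≠ 0)
    (hN : ∀ x ∈ s, HasDerivAt N (N' x) x)
    (hM : ∀ x ∈ s, y₁ x * N' x - m * y₂ x * N x = M x)
    (hpoly : IsPolynomialInOn n y (fun x ↦ M x / y₁ x ^ (m + 2)) s) :
    IsPolynomialInOn (n + 1) y (fun x ↦ N x / y₁ x ^ m) s :=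
  hpoly.of_hasDerivAt hs hs' hy fun x hx ↦
    hM x hx ▸ hasDerivAt_div_pow (hN x hx) (hy₁ x hx) (hne x hx) m

end IsPolynomialInOn

theorem linearization_fifth_order_general {𝕜 : Type*} [RCLike 𝕜] {s : Set 𝕜}
    {y y₁ y₂ y₃ y₄ y₅ : 𝕜 → 𝕜} (hs : IsOpen s) (hs' : IsPreconnected s)
    (hy : ∀ x ∈ s, HasDerivAt y (y₁ x) x) (hy₁ : ∀ x ∈ s, HasDerivAt y₁ (y₂ x) x)
    (hy₂ : ∀ x ∈ s, HasDerivAt y₂ (y₃ x) x) (hy₃ : ∀ x ∈ s, HasDerivAt y₃ (y₄ x) x)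
    (hy₄ : ∀ x ∈ s, HasDerivAt y₄ (y₅ x) x) (hne : ∀ x ∈ s, y₁ x ≠ 0)
    (hODE : ∀ x ∈ s, y₁ x ^ 3 * y₅ x - 15 * y₁ x ^ 2 * y₂ x * y₄ x - 10 * y₁ x ^ 2 * y₃ x ^ 2 +
      105 * y₁ x * y₂ x ^ 2 * y₃ x - 105 * y₂ x ^ 4 = 0) :
    ∃ c₀ c₁ c₂ c₃ c₄ : 𝕜, ∀ x ∈ s,
      x = c₀ + c₁ * y x + c₂ * y x ^ 2 + c₃ * y x ^ 3 + c₄ * y x ^ 4 := by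
  have h₄ : IsPolynomialInOn 1 y
      (fun x ↦ (10 * (y₁ x * y₂ x * y₃ x) - 15 * y₂ x ^ 3 - y₁ x ^ 2 * y₄ x) / y₁ x ^ 7) s :=
    .of_hasDerivAt_div_pow 7 hs hs' hy hy₁ hne
      (fun x hx ↦ hasDerivAt_inverse_fourth_deriv_numerator (hy₁ x hx) (hy₂ x hx) (hy₃ x hx)
        (hy₄ x hx))
      (fun x hx ↦ by push_cast; linear_combination -hODE x hx)
      (.of_eq_zero fun x _ ↦ zero_div _)
  have h₃ : IsPolynomialInOn 2 y (fun x ↦ (3 * y₂ x ^ 2 - y₁ x * y₃ x) / y₁ x ^ 5) s :=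
    h₄.of_hasDerivAt_div_pow 5 hs hs' hy hy₁ hne
      (fun x hx ↦ (((hy₂ x hx).fun_pow 2).const_mul 3).fun_sub ((hy₁ x hx).fun_mul (hy₃ x hx)))
      fun x _ ↦ by push_cast; ring
  have h₂ : IsPolynomialInOn 3 y (fun x ↦ -y₂ x / y₁ x ^ 3) s :=
    h₃.of_hasDerivAt_div_pow 3 hs hs' hy hy₁ hne (fun x hx ↦ (hy₂ x hx).fun_neg)
      fun x _ ↦ by push_cast; ring
  have h₁ : IsPolynomialInOn 4 y (fun x ↦ 1 / y₁ x ^ 1) s :=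
    h₂.of_hasDerivAt_div_pow 1 hs hs' hy hy₁ hne (fun x _ ↦ hasDerivAt_const x 1)
      fun x _ ↦ by push_cast; ring
  have h₀ : IsPolynomialInOn 5 y (fun x ↦ x) s :=
    h₁.of_hasDerivAt hs hs' hy fun x hx ↦
      (hasDerivAt_id' x).congr_deriv (by field_simp [hne x hx])
  obtain ⟨c, hc⟩ := h₀.exists_eq_sum
  exact ⟨c 0, c 1, c 2, c 3, c 4, fun x hx ↦ by simpa [Finset.sum_range_succ] using hc x hx⟩

theorem linearization_fifth_order
    (I : Set ℝ) (hI : IsOpen I ∧ I.OrdConnected)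
    (y : ℝ → ℝ) (hy : FiveDiffOn y I)
    (hy' : ∀ x ∈ I, deriv y x ≠ 0)
    (hODE : ∀ x ∈ I, (deriv y x) ^ 3 * deriv^[5] y x -
      15 * (deriv y x) ^ 2 * deriv^[2] y x * deriv^[4] y x -
      10 * (deriv y x) ^ 2 * (deriv^[3] y x) ^ 2 +
      105 * deriv y x * (deriv^[2] y x) ^ 2 * deriv^[3] y x -
      105 * (deriv^[2] y x) ^ 4 = 0) :
    ∃ c₀ c₁ c₂ c₃ c₄ : ℝ, ∀ x ∈ I,
      x = c₀ + c₁ * y x + c₂ * (y x) ^ 2 + c₃ * (y x) ^ 3 + c₄ * (y x) ^ 4 :=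
  linearization_fifth_order_general hI.1 hI.2.isPreconnected
    (fun x hx ↦ (hy x hx).1.hasDerivAt) (fun x hx ↦ (hy x hx).2.1.hasDerivAt)
    (fun x hx ↦ (hy x hx).2.2.1.hasDerivAt) (fun x hx ↦ (hy x hx).2.2.2.1.hasDerivAt)
    (fun x hx ↦ (hy x hx).2.2.2.2.hasDerivAt) hy' hODE
end
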